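/- arXiv:2107.05299 — 2 statements merged into one kernel-verified Lean document; each statement's English description precedes it below -/
import Mathlib

section
/- Let κ = 1/2 and let (u, v) be a classical solution of the quadratic NLS system on an open interval I. Let a ∈ C^∞(ℝ⁶; ℝ) be such that a and all its derivatives grow at most polynomially. Then for all t ∈ I, (d²/dt²) ∫_{ℝ⁶} (|u|² + |v|²) a(x) dx = 4·Re ∫_{ℝ⁶} Σ_{j,k=1}^{6} (∂_j conj(u) ∂_k u + (1/4) ∂_j conj(v) ∂_k v) ∂_j∂_k a(x) dx − ∫_{ℝ⁶} (|u|² + (1/4)|v|²) Δ²a(x) dx − Re ∫_{ℝ⁶} conj(v)·u² · Δa(x) dx. -/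
open MeasureTheory Real Filter

noncomputable section

/-- Six-dimensional Euclidean space. -/
abbrev E6 := EuclideanSpace ℝ (Fin 6)

/-- Partial derivative of a complex-valued function in the `j`-th coordinate direction. -/
def pd (f : E6 → ℂ) (j : Fin 6) (x : E6) : ℂ := fderiv ℝ f x (EuclideanSpace.single j 1)

/-- Laplacian of a complex-valued function on `ℝ⁶`. -/
def lap (f : E6 → ℂ) (x : E6) : ℂ :=
  ∑ j : Fin 6, fderiv ℝ (fun y => pd f j y) x (EuclideanSpace.single j 1)

/-- Partial derivative of a real-valued function in the `j`-th coordinate direction. -/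
def pdR (f : E6 → ℝ) (j : Fin 6) (x : E6) : ℝ := fderiv ℝ f x (EuclideanSpace.single j 1)

/-- Laplacian of a real-valued function on `ℝ⁶`. -/
def lapR (f : E6 → ℝ) (x : E6) : ℝ :=
  ∑ j : Fin 6, fderiv ℝ (fun y => pdR f j y) x (EuclideanSpace.single j 1)

/-- `|∇f(x)|²`, the squared length of the gradient. -/
def gradNormSq (f : E6 → ℂ) (x : E6) : ℝ := ∑ j : Fin 6, ‖pd f j x‖ ^ 2

/-- Kinetic energy `H(u,v) = ∫|∇u|² + (κ/2)∫|∇v|²`. -/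
def Hen (κ : ℝ) (u v : E6 → ℂ) : ℝ :=
  (∫ x : E6, gradNormSq u x) + (κ / 2) * ∫ x : E6, gradNormSq v x

/-- Potential energy `R(u,v) = Re ∫ conj(v) u²`. -/
def Ren (u v : E6 → ℂ) : ℝ := (∫ x : E6, (starRingEnd ℂ) (v x) * (u x) ^ 2).re

/-- Energy `E(u,v) = H(u,v) − R(u,v)`. -/
def Een (κ : ℝ) (u v : E6 → ℂ) : ℝ := Hen κ u v - Ren u v

/-- Mass `M(u,v) = ∫|u|² + ∫|v|²`. -/
def Mass (u v : E6 → ℂ) : ℝ := (∫ x : E6, ‖u x‖ ^ 2) + ∫ x : E6, ‖v x‖ ^ 2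

/-- `j`-th component of the momentum `P(u,v) = Im ∫ (conj(u)∇u + (1/2)conj(v)∇v)`. -/
def Pmom (u v : E6 → ℂ) (j : Fin 6) : ℝ :=
  (∫ x : E6, (starRingEnd ℂ) (u x) * pd u j x
    + (1 / 2 : ℂ) * (starRingEnd ℂ) (v x) * pd v j x).im

/-- The explicit profile `φ₀(x) = √κ (1 + |x|²/24)⁻²`. -/
def phi0 (κ : ℝ) (x : E6) : ℝ := Real.sqrt κ * ((1 + ‖x‖ ^ 2 / 24) ^ 2)⁻¹

/-- First component of the ground state `W`. -/
def W1 (κ : ℝ) (x : E6) : ℂ := (phi0 κ x : ℂ)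

/-- Second component of the ground state `W`, namely `φ₀/√κ`. -/
def W2 (κ : ℝ) (x : E6) : ℂ := ((phi0 κ x / Real.sqrt κ : ℝ) : ℂ)

/-- A function is Schwartz: smooth with all seminorms `sup ‖x‖^k ‖D^n f‖` finite. -/
def IsSchwartz (f : E6 → ℂ) : Prop :=
  ContDiff ℝ (⊤ : ℕ∞) f ∧ ∀ k n : ℕ, ∃ C : ℝ, ∀ x : E6, ‖x‖ ^ k * ‖iteratedFDeriv ℝ n f x‖ ≤ C

/-- A classical solution of the quadratic NLS system
`i∂ₜu + Δu + v conj(u) = 0`, `i∂ₜv + κΔv + u² = 0` on a time set `I`,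
with Schwartz slices whose seminorms are bounded locally uniformly in `t`. -/
structure IsClassicalSol (κ : ℝ) (I : Set ℝ) (u v : ℝ → E6 → ℂ) : Prop where
  smooth : ContDiffOn ℝ (⊤ : ℕ∞) (fun p : ℝ × E6 => (u p.1 p.2, v p.1 p.2)) (I ×ˢ Set.univ)
  eqn_u : ∀ t ∈ I, ∀ x : E6,
    Complex.I * deriv (fun s => u s x) t + lap (u t) x
      + v t x * (starRingEnd ℂ) (u t x) = 0
  eqn_v : ∀ t ∈ I, ∀ x : E6,
    Complex.I * deriv (fun s => v s x) t + (κ : ℂ) * lap (v t) x + (u t x) ^ 2 = 0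
  schwartz_u : ∀ t ∈ I, IsSchwartz (u t)
  schwartz_v : ∀ t ∈ I, IsSchwartz (v t)
  bounds : ∀ K : Set ℝ, K ⊆ I → IsCompact K → ∀ k n : ℕ, ∃ C : ℝ, ∀ t ∈ K, ∀ x : E6,
    ‖x‖ ^ k * ‖iteratedFDeriv ℝ n (u t) x‖ ≤ C ∧ ‖x‖ ^ k * ‖iteratedFDeriv ℝ n (v t) x‖ ≤ C

/-- Second partial derivative `∂_j ∂_k a` of a real-valued function. -/
def pd2R (a : E6 → ℝ) (j k : Fin 6) (x : E6) : ℝ :=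
  fderiv ℝ (fun y => pdR a k y) x (EuclideanSpace.single j 1)

/-!
Mass and momentum obey local conservation laws `∂ₜρ = -∑ⱼ ∂ⱼPⱼ` and, at mass resonance,
`∂ₜPⱼ = -∑ₖ ∂ₖTⱼₖ`: the mass exchanged between `u` and `v` cancels, and for `κ = 1/2` the mass
current is twice the momentum density, on which the quadratic terms act by a gradient. Pairing with
the weight and integrating by parts twice gives `d²/dt² ∫ ρ a = ∑ⱼₖ ∫ Tⱼₖ ∂ⱼ∂ₖa`. The kinetic part
of `T` is built from `4 Re (∂ⱼw̄ ∂ₖw) - ∂ⱼ∂ₖ|w|²`, whose last term yields `-∫ |w|² Δ²a`, and its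
pressure part `-δⱼₖ Re (v̄ u²)` yields the term in `Δa`.
-/

open scoped ContDiff ComplexConjugate

section UniformSchwartz

variable {ι E V W A : Type*} [NormedAddCommGroup E] [NormedSpace ℝ E]
  [NormedAddCommGroup V] [NormedSpace ℝ V] [NormedAddCommGroup W] [NormedSpace ℝ W]
  [NormedRing A] [NormedAlgebra ℝ A] {K : Set ι}

/-- The functions `F t`, `t ∈ K`, form a bounded subset of the Schwartz space. They are kept as bare
functions rather than as elements of `SchwartzMap` because only the times in `K` are constrained. -/
structure UniformSchwartzOn (K : Set ι) (F : ι → E → V) : Prop where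
  contDiff : ∀ t ∈ K, ContDiff ℝ ∞ (F t)
  decay : ∀ k n : ℕ, ∃ C : ℝ, ∀ t ∈ K, ∀ x, ‖x‖ ^ k * ‖iteratedFDeriv ℝ n (F t) x‖ ≤ C

/-- The functions `G t`, `t ∈ K`, have temperate growth with exponents and constants independent of
`t`. Both fixed temperate weights and uniformly Schwartz families are of this kind. -/
structure UniformTemperateGrowthOn (K : Set ι) (G : ι → E → V) : Prop where
  contDiff : ∀ t ∈ K, ContDiff ℝ ∞ (G t)
  growth : ∀ n : ℕ, ∃ (k : ℕ) (C : ℝ), ∀ t ∈ K, ∀ x,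
    ‖iteratedFDeriv ℝ n (G t) x‖ ≤ C * (1 + ‖x‖) ^ k

theorem uniformTemperateGrowthOn_const {a : E → V} (ha : Function.HasTemperateGrowth a) :
    UniformTemperateGrowthOn K fun _ => a where
  contDiff _ _ := ha.1
  growth n := (ha.2 n).imp fun _ => Exists.imp fun _ hC _ _ => hC

theorem hasTemperateGrowth_fderiv {f : E → V} (hf : Function.HasTemperateGrowth f) :
    Function.HasTemperateGrowth (fderiv ℝ f) := by
  refine ⟨hf.1.fderiv_right (m := ∞) (by simp), fun n => ?_⟩
  simpa only [norm_iteratedFDeriv_fderiv] using hf.2 (n + 1)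

namespace UniformSchwartzOn

variable {F G : ι → E → V}

theorem uniformTemperateGrowthOn (hF : UniformSchwartzOn K F) :
    UniformTemperateGrowthOn K F where
  contDiff := hF.contDiff
  growth n := by
    obtain ⟨C, hC⟩ := hF.decay 0 n
    exact ⟨0, C, fun t ht x => by simpa using hC t ht x⟩

theorem one_add_norm_pow_mul_le (hF : UniformSchwartzOn K F) (k n : ℕ) :
    ∃ C : ℝ, ∀ t ∈ K, ∀ x, (1 + ‖x‖) ^ k * ‖iteratedFDeriv ℝ n (F t) x‖ ≤ C := by
  obtain ⟨C₀, hC₀⟩ := hF.decay 0 n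
  obtain ⟨C, hC⟩ := hF.decay k n
  refine ⟨2 ^ (k - 1) * (C₀ + C), fun t ht x => ?_⟩
  calc (1 + ‖x‖) ^ k * ‖iteratedFDeriv ℝ n (F t) x‖
      ≤ 2 ^ (k - 1) * (1 ^ k + ‖x‖ ^ k) * ‖iteratedFDeriv ℝ n (F t) x‖ := by
        gcongr
        exact add_pow_le zero_le_one (norm_nonneg x) k
    _ = 2 ^ (k - 1) * (‖x‖ ^ 0 * ‖iteratedFDeriv ℝ n (F t) x‖
          + ‖x‖ ^ k * ‖iteratedFDeriv ℝ n (F t) x‖) := by ring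
    _ ≤ 2 ^ (k - 1) * (C₀ + C) := by gcongr <;> solve_by_elim

theorem clm_comp (hF : UniformSchwartzOn K F) (L : V →L[ℝ] W) :
    UniformSchwartzOn K fun t x => L (F t x) where
  contDiff t ht := L.contDiff.comp (hF.contDiff t ht)
  decay k n := by
    obtain ⟨C, hC⟩ := hF.decay k n
    refine ⟨‖L‖ * C, fun t ht x => ?_⟩
    calc ‖x‖ ^ k * ‖iteratedFDeriv ℝ n (L ∘ F t) x‖
        ≤ ‖x‖ ^ k * (‖L‖ * ‖iteratedFDeriv ℝ n (F t) x‖) := by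
          gcongr
          exact L.norm_iteratedFDeriv_comp_left (hF.contDiff t ht).contDiffAt
            (mod_cast le_top)
      _ = ‖L‖ * (‖x‖ ^ k * ‖iteratedFDeriv ℝ n (F t) x‖) := mul_left_comm ..
      _ ≤ ‖L‖ * C := by gcongr; exact hC t ht x

theorem add (hF : UniformSchwartzOn K F) (hG : UniformSchwartzOn K G) :
    UniformSchwartzOn K fun t x => F t x + G t x where
  contDiff t ht := (hF.contDiff t ht).add (hG.contDiff t ht)
  decay k n := by
    obtain ⟨C, hC⟩ := hF.decay k n
    obtain ⟨D, hD⟩ := hG.decay k n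
    refine ⟨C + D, fun t ht x => ?_⟩
    have iteratedFDeriv_add : iteratedFDeriv ℝ n (fun y => F t y + G t y) x
        = iteratedFDeriv ℝ n (F t) x + iteratedFDeriv ℝ n (G t) x :=
      iteratedFDeriv_add_apply
        ((hF.contDiff t ht).contDiffAt.of_le (mod_cast le_top))
        ((hG.contDiff t ht).contDiffAt.of_le (mod_cast le_top))
    calc ‖x‖ ^ k * ‖iteratedFDeriv ℝ n (fun y => F t y + G t y) x‖
        ≤ ‖x‖ ^ k * (‖iteratedFDeriv ℝ n (F t) x‖ + ‖iteratedFDeriv ℝ n (G t) x‖) := by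
          rw [iteratedFDeriv_add]
          gcongr
          exact norm_add_le _ _
      _ ≤ C + D := by rw [mul_add]; exact add_le_add (hC t ht x) (hD t ht x)

theorem neg (hF : UniformSchwartzOn K F) : UniformSchwartzOn K fun t x => -F t x :=
  hF.clm_comp (-ContinuousLinearMap.id ℝ V)

theorem sub (hF : UniformSchwartzOn K F) (hG : UniformSchwartzOn K G) :
    UniformSchwartzOn K fun t x => F t x - G t x := by
  simpa only [sub_eq_add_neg] using hF.add hG.neg

protected theorem zero : UniformSchwartzOn K fun (_ : ι) (_ : E) => (0 : V) where
  contDiff _ _ := contDiff_const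
  decay k n := ⟨0, fun t _ x => by
    rw [iteratedFDeriv_fun_zero, Pi.zero_apply, norm_zero, mul_zero]⟩

theorem sum {κ : Type*} {s : Finset κ} {H : κ → ι → E → V}
    (hH : ∀ j ∈ s, UniformSchwartzOn K (H j)) :
    UniformSchwartzOn K fun t x => ∑ j ∈ s, H j t x := by
  classical
  induction s using Finset.induction_on with
  | empty => simpa using UniformSchwartzOn.zero
  | insert j s hj ih =>
    simp only [Finset.sum_insert hj]
    exact (hH j (Finset.mem_insert_self j s)).add
      (ih fun k hk => hH k (Finset.mem_insert_of_mem hk))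

protected theorem fderiv (hF : UniformSchwartzOn K F) :
    UniformSchwartzOn K fun t => fderiv ℝ (F t) where
  contDiff t ht := (hF.contDiff t ht).fderiv_right (m := ∞) (by simp)
  decay k n := by simpa only [norm_iteratedFDeriv_fderiv] using hF.decay k (n + 1)

theorem mul_uniformTemperateGrowthOn {F G : ι → E → A} (hF : UniformSchwartzOn K F)
    (hG : UniformTemperateGrowthOn K G) : UniformSchwartzOn K fun t x => F t x * G t x where
  contDiff t ht := (hF.contDiff t ht).mul (hG.contDiff t ht)
  decay k n := by
    choose m D hD using hG.growth
    choose C hC using hF.one_add_norm_pow_mul_le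
    refine ⟨∑ i ∈ Finset.range (n + 1), n.choose i * (C (k + m (n - i)) i * D (n - i)),
      fun t ht x => ?_⟩
    have leibniz_term (i : ℕ) : ‖x‖ ^ k *
        (‖iteratedFDeriv ℝ i (F t) x‖ * ‖iteratedFDeriv ℝ (n - i) (G t) x‖)
        ≤ C (k + m (n - i)) i * D (n - i) := by
      have hDpos : 0 ≤ D (n - i) := nonneg_of_mul_nonneg_left
        ((norm_nonneg _).trans (hD (n - i) t ht x)) (by positivity)
      calc _ ≤ (1 + ‖x‖) ^ k * (‖iteratedFDeriv ℝ i (F t) x‖ *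
              (D (n - i) * (1 + ‖x‖) ^ m (n - i))) := by
            gcongr
            · exact le_add_of_nonneg_left zero_le_one
            · exact hD _ t ht x
        _ = (1 + ‖x‖) ^ (k + m (n - i)) * ‖iteratedFDeriv ℝ i (F t) x‖ * D (n - i) := by ring
        _ ≤ C (k + m (n - i)) i * D (n - i) := by gcongr; exact hC _ _ t ht x
    calc ‖x‖ ^ k * ‖iteratedFDeriv ℝ n (fun y => F t y * G t y) x‖
        ≤ ‖x‖ ^ k * ∑ i ∈ Finset.range (n + 1), n.choose i * ‖iteratedFDeriv ℝ i (F t) x‖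
            * ‖iteratedFDeriv ℝ (n - i) (G t) x‖ := by
          gcongr
          exact norm_iteratedFDeriv_mul_le (hF.contDiff t ht) (hG.contDiff t ht) x
            (mod_cast le_top)
      _ = ∑ i ∈ Finset.range (n + 1), n.choose i * (‖x‖ ^ k *
            (‖iteratedFDeriv ℝ i (F t) x‖ * ‖iteratedFDeriv ℝ (n - i) (G t) x‖)) := by
          rw [Finset.mul_sum]
          exact Finset.sum_congr rfl fun _ _ => by ring
      _ ≤ _ := Finset.sum_le_sum fun i _ => by gcongr ?_ * ?_; exact leibniz_term i

theorem mul {F G : ι → E → A} (hF : UniformSchwartzOn K F) (hG : UniformSchwartzOn K G) :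
    UniformSchwartzOn K fun t x => F t x * G t x :=
  hF.mul_uniformTemperateGrowthOn hG.uniformTemperateGrowthOn

theorem const_mul {F : ι → E → A} (hF : UniformSchwartzOn K F) (c : A) :
    UniformSchwartzOn K fun t x => c * F t x :=
  hF.clm_comp (ContinuousLinearMap.mul ℝ A c)

section Integral

variable [MeasurableSpace E] {μ : Measure E} [μ.HasTemperateGrowth]

variable (μ) in
theorem exists_integrable_bound (hF : UniformSchwartzOn K F) :
    ∃ bound : E → ℝ, Integrable bound μ ∧ ∀ t ∈ K, ∀ x, ‖F t x‖ ≤ bound x := by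
  obtain ⟨C, hC⟩ := hF.one_add_norm_pow_mul_le μ.integrablePower 0
  refine ⟨_, μ.integrable_pow_neg_integrablePower.const_mul C, fun t ht x => ?_⟩
  rw [Real.rpow_neg (by positivity), Real.rpow_natCast, ← div_eq_mul_inv,
    le_div_iff₀' (by positivity)]
  simpa using hC t ht x

variable [BorelSpace E] [SecondCountableTopology E]

theorem integrable (hF : UniformSchwartzOn K F) {t : ι} (ht : t ∈ K) : Integrable (F t) μ := by
  obtain ⟨bound, hbound, hle⟩ := hF.exists_integrable_bound μ
  exact hbound.mono' (hF.contDiff t ht).continuous.aestronglyMeasurable (.of_forall (hle t ht))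

theorem hasDerivAt_integral {K : Set ℝ} {F F' : ℝ → E → V} (hF : UniformSchwartzOn K F)
    (hF' : UniformSchwartzOn K F') {t : ℝ} (ht : K ∈ nhds t)
    (hderiv : ∀ s ∈ K, ∀ x, HasDerivAt (fun r => F r x) (F' s x) s) :
    HasDerivAt (fun s => ∫ x, F s x ∂μ) (∫ x, F' t x ∂μ) t := by
  have htK : t ∈ K := mem_of_mem_nhds ht
  obtain ⟨bound, hbound, hle⟩ := hF'.exists_integrable_bound μ
  refine (hasDerivAt_integral_of_dominated_loc_of_deriv_le ht ?_ (hF.integrable htK)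
    (hF'.integrable htK).aestronglyMeasurable (.of_forall fun x s hs => hle s hs x) hbound
    (.of_forall fun x s hs => hderiv s hs x)).2
  filter_upwards [ht] with s hs using (hF.integrable hs).aestronglyMeasurable

end Integral

end UniformSchwartzOn

end UniformSchwartz

section MixedDerivative

variable {E V : Type*} [NormedAddCommGroup E] [NormedSpace ℝ E]
  [NormedAddCommGroup V] [NormedSpace ℝ V]

theorem isSymmSndFDerivAt_of_contDiffAt {f : E → V} {x : E} (hf : ContDiffAt ℝ 2 f x) :
    IsSymmSndFDerivAt ℝ f x :=
  hf.isSymmSndFDerivAt (by rw [minSmoothness_of_isRCLikeNormedField])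

theorem hasFDerivAt_fderiv_of_contDiffAt {f : E → V} {x : E} (hf : ContDiffAt ℝ 2 f x) :
    HasFDerivAt (fderiv ℝ f) (fderiv ℝ (fderiv ℝ f) x) x :=
  ((hf.fderiv_right (m := 1) (by norm_num)).differentiableAt one_ne_zero).hasFDerivAt

variable {F : ℝ → E → V} {t : ℝ} {x : E}

theorem hasDerivAt_left_of_differentiableAt_uncurry
    (hF : DifferentiableAt ℝ (Function.uncurry F) (t, x)) :
    HasDerivAt (fun s => F s x) (fderiv ℝ (Function.uncurry F) (t, x) (1, 0)) t :=
  hF.hasFDerivAt.comp_hasDerivAt (f := fun s => (s, x)) t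
    ((hasDerivAt_id t).prodMk (hasDerivAt_const t x))

theorem hasFDerivAt_right_of_differentiableAt_uncurry
    (hF : DifferentiableAt ℝ (Function.uncurry F) (t, x)) :
    HasFDerivAt (F t) ((fderiv ℝ (Function.uncurry F) (t, x)).comp (.inr ℝ ℝ E)) x :=
  hF.hasFDerivAt.comp x (hasFDerivAt_prodMk_right t x)

theorem hasDerivAt_fderiv_apply (hF : ContDiffAt ℝ 2 (Function.uncurry F) (t, x)) (v : E) :
    HasDerivAt (fun s => fderiv ℝ (F s) x v) (fderiv ℝ (fun y => deriv (F · y) t) x v) t := by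
  set Φ := Function.uncurry F
  have hΦ : ∀ᶠ p in nhds (t, x), DifferentiableAt ℝ Φ p :=
    (hF.eventually (by simp)).mono fun p hp => hp.differentiableAt two_ne_zero
  have hΦ' := hasFDerivAt_fderiv_of_contDiffAt hF
  have hderiv_fderiv : HasDerivAt (fun s => fderiv ℝ Φ (s, x) (0, v))
      (fderiv ℝ (fderiv ℝ Φ) (t, x) (1, 0) (0, v)) t :=
    (ContinuousLinearMap.apply ℝ V ((0 : ℝ), v)).hasFDerivAt.comp_hasDerivAt t
      (hΦ'.comp_hasDerivAt t ((hasDerivAt_id t).prodMk (hasDerivAt_const t x)))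
  have hfderiv_deriv : HasFDerivAt (fun y => fderiv ℝ Φ (t, y) (1, 0)) _ x :=
    (ContinuousLinearMap.apply ℝ V ((1 : ℝ), (0 : E))).hasFDerivAt.comp x
      (hΦ'.comp x (hasFDerivAt_prodMk_right t x))
  have hspace : (fun s => fderiv ℝ (F s) x v) =ᶠ[nhds t] fun s => fderiv ℝ Φ (s, x) (0, v) := by
    filter_upwards [(by fun_prop : ContinuousAt (fun s => (s, x)) t).eventually hΦ] with s hs
    simp [(hasFDerivAt_right_of_differentiableAt_uncurry hs).fderiv, Φ]
  have htime : (fun y => deriv (F · y) t) =ᶠ[nhds x] fun y => fderiv ℝ Φ (t, y) (1, 0) := by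
    filter_upwards [(by fun_prop : ContinuousAt (fun y => (t, y)) x).eventually hΦ] with y hy
    exact (hasDerivAt_left_of_differentiableAt_uncurry hy).deriv
  convert hderiv_fderiv.congr_of_eventuallyEq hspace using 1
  rw [htime.fderiv_eq, hfderiv_deriv.fderiv,
    ← isSymmSndFDerivAt_of_contDiffAt hF (0, v) (1, 0)]
  simp

end MixedDerivative

section PartialDerivative

variable {f g : E6 → ℂ} {x : E6}

@[fun_prop]
theorem contDiff_conj_comp (hf : ContDiff ℝ ∞ f) : ContDiff ℝ ∞ fun y => conj (f y) :=
  Complex.conjCLE.contDiff.comp hf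

@[fun_prop]
theorem contDiff_pd (hf : ContDiff ℝ ∞ f) (j : Fin 6) : ContDiff ℝ ∞ (pd f j) :=
  (hf.fderiv_right (m := ∞) (by simp)).clm_apply contDiff_const

@[fun_prop]
theorem differentiable_pd (hf : ContDiff ℝ ∞ f) (j : Fin 6) : Differentiable ℝ (pd f j) :=
  (contDiff_pd hf j).differentiable (by simp)

theorem pd_add (hf : DifferentiableAt ℝ f x) (hg : DifferentiableAt ℝ g x) (j : Fin 6) :
    pd (fun y => f y + g y) j x = pd f j x + pd g j x := by
  simp [pd, fderiv_fun_add hf hg]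

theorem pd_sub (hf : DifferentiableAt ℝ f x) (hg : DifferentiableAt ℝ g x) (j : Fin 6) :
    pd (fun y => f y - g y) j x = pd f j x - pd g j x := by
  simp [pd, fderiv_fun_sub hf hg]

theorem pd_mul (hf : DifferentiableAt ℝ f x) (hg : DifferentiableAt ℝ g x) (j : Fin 6) :
    pd (fun y => f y * g y) j x = f x * pd g j x + g x * pd f j x := by
  simp [pd, fderiv_fun_mul hf hg]

theorem pd_const_mul (c : ℂ) (hf : DifferentiableAt ℝ f x) (j : Fin 6) :
    pd (fun y => c * f y) j x = c * pd f j x := by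
  simp [pd, fderiv_const_mul hf]

theorem pd_sum {κ : Type*} {s : Finset κ} {f : κ → E6 → ℂ}
    (hf : ∀ i ∈ s, DifferentiableAt ℝ (f i) x) (j : Fin 6) :
    pd (fun y => ∑ i ∈ s, f i y) j x = ∑ i ∈ s, pd (f i) j x := by
  simp [pd, fderiv_fun_sum hf]

theorem pd_conj (f : E6 → ℂ) (j : Fin 6) :
    pd (fun y => conj (f y)) j = fun x => conj (pd f j x) := by
  funext x
  have h := Complex.conjCLE.comp_fderiv (f := f) (x := x)
  exact congrArg (fun L : E6 →L[ℝ] ℂ => L (EuclideanSpace.single j 1)) h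

theorem pd_comm (hf : ContDiff ℝ 2 f) (j k : Fin 6) : pd (pd f j) k = pd (pd f k) j := by
  have pd_pd_eq (i l : Fin 6) (x : E6) : pd (pd f i) l x
      = fderiv ℝ (fderiv ℝ f) x (EuclideanSpace.single l 1) (EuclideanSpace.single i 1) := by
    have h := (ContinuousLinearMap.apply ℝ ℂ
      (EuclideanSpace.single i (1 : ℝ) : E6)).hasFDerivAt.comp x
        (hasFDerivAt_fderiv_of_contDiffAt hf.contDiffAt)
    exact congrArg (fun L : E6 →L[ℝ] ℂ => L (EuclideanSpace.single l 1)) h.fderiv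
  funext x
  rw [pd_pd_eq, pd_pd_eq, isSymmSndFDerivAt_of_contDiffAt hf.contDiffAt]

@[fun_prop]
theorem differentiable_lap (hf : ContDiff ℝ ∞ f) : Differentiable ℝ (lap f) :=
  Differentiable.fun_sum fun j _ => differentiable_pd (contDiff_pd hf j) j

theorem lap_pd (hf : ContDiff ℝ ∞ f) (j : Fin 6) : lap (pd f j) = pd (lap f) j := by
  funext x
  calc lap (pd f j) x = ∑ k, pd (pd (pd f k) k) j x := by
        refine Finset.sum_congr rfl fun k _ => ?_
        change pd (pd (pd f j) k) k x = _
        rw [pd_comm (hf.of_le ENat.LEInfty.out) j k,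
          pd_comm ((contDiff_pd hf k).of_le ENat.LEInfty.out) j k]
    _ = pd (lap f) j x := (pd_sum (fun k _ => by fun_prop) j).symm

theorem pd_ofReal {a : E6 → ℝ} (ha : Differentiable ℝ a) (j : Fin 6) :
    pd (fun y => (a y : ℂ)) j = fun x => (pdR a j x : ℂ) := by
  funext x
  have h := Complex.ofRealCLM.hasFDerivAt.comp x (ha x).hasFDerivAt
  exact congrArg (fun L : E6 →L[ℝ] ℂ => L (EuclideanSpace.single j 1)) h.fderiv

theorem contDiff_pdR {a : E6 → ℝ} (ha : ContDiff ℝ ∞ a) (j : Fin 6) : ContDiff ℝ ∞ (pdR a j) :=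
  (ha.fderiv_right (m := ∞) (by simp)).clm_apply contDiff_const

@[fun_prop]
theorem differentiable_pdR {a : E6 → ℝ} (ha : ContDiff ℝ ∞ a) (j : Fin 6) :
    Differentiable ℝ (pdR a j) :=
  (contDiff_pdR ha j).differentiable (by simp)

theorem contDiff_lapR {a : E6 → ℝ} (ha : ContDiff ℝ ∞ a) : ContDiff ℝ ∞ (lapR a) :=
  ContDiff.sum fun j _ => contDiff_pdR (contDiff_pdR ha j) j

theorem lap_ofReal {a : E6 → ℝ} (ha : ContDiff ℝ ∞ a) :
    lap (fun y => (a y : ℂ)) = fun x => (lapR a x : ℂ) := by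
  funext x
  change ∑ j, pd (pd (fun y => (a y : ℂ)) j) j x = ((∑ j, pdR (pdR a j) j x : ℝ) : ℂ)
  simp only [pd_ofReal (ha.differentiable (by simp)), pd_ofReal (differentiable_pdR ha _),
    Complex.ofReal_sum]

end PartialDerivative

section SchwartzCalculus

variable {ι : Type*} {K : Set ι} {F : ι → E6 → ℂ}

protected theorem UniformSchwartzOn.pd (hF : UniformSchwartzOn K F) (j : Fin 6) :
    UniformSchwartzOn K fun t => pd (F t) j :=
  hF.fderiv.clm_comp (ContinuousLinearMap.apply ℝ ℂ (EuclideanSpace.single j 1))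

theorem UniformSchwartzOn.conj (hF : UniformSchwartzOn K F) :
    UniformSchwartzOn K fun t x => conj (F t x) :=
  hF.clm_comp Complex.conjCLE.toContinuousLinearMap

theorem hasTemperateGrowth_pd {f : E6 → ℂ} (hf : Function.HasTemperateGrowth f) (j : Fin 6) :
    Function.HasTemperateGrowth (pd f j) :=
  (ContinuousLinearMap.apply ℝ ℂ (EuclideanSpace.single j (1 : ℝ) : E6)).hasTemperateGrowth.comp
    (hasTemperateGrowth_fderiv hf)

theorem hasTemperateGrowth_lap {f : E6 → ℂ} (hf : Function.HasTemperateGrowth f) :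
    Function.HasTemperateGrowth (lap f) :=
  Function.HasTemperateGrowth.sum fun j _ => hasTemperateGrowth_pd (hasTemperateGrowth_pd hf j) j

theorem UniformSchwartzOn.mul_hasTemperateGrowth (hF : UniformSchwartzOn K F) {a : E6 → ℂ}
    (ha : Function.HasTemperateGrowth a) : UniformSchwartzOn K fun t x => F t x * a x :=
  hF.mul_uniformTemperateGrowthOn (uniformTemperateGrowthOn_const ha)

theorem UniformSchwartzOn.integral_mul_pd (hF : UniformSchwartzOn K F) {t : ι} (ht : t ∈ K)
    {a : E6 → ℂ} (ha : Function.HasTemperateGrowth a) (j : Fin 6) :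
    ∫ x, F t x * pd a j x = -∫ x, pd (F t) j x * a x :=
  integral_mul_fderiv_eq_neg_fderiv_mul_of_integrable
    (((hF.pd j).mul_hasTemperateGrowth ha).integrable ht)
    ((hF.mul_hasTemperateGrowth (hasTemperateGrowth_pd ha j)).integrable ht)
    ((hF.mul_hasTemperateGrowth ha).integrable ht)
    (fun x _ => (hF.contDiff t ht).differentiable (by simp) x)
    (fun x _ => ha.1.differentiable (by simp) x)

theorem UniformSchwartzOn.integral_mul_lap (hF : UniformSchwartzOn K F) {t : ι} (ht : t ∈ K)
    {a : E6 → ℂ} (ha : Function.HasTemperateGrowth a) :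
    ∫ x, F t x * lap a x = -∑ j, ∫ x, pd (F t) j x * pd a j x := by
  have ha' (j : Fin 6) := hasTemperateGrowth_pd ha j
  calc ∫ x, F t x * lap a x
      = ∫ x, ∑ j, F t x * pd (pd a j) j x := integral_congr_ae (.of_forall fun x =>
        Finset.mul_sum _ _ _)
    _ = ∑ j, ∫ x, F t x * pd (pd a j) j x := integral_finsetSum _ fun j _ =>
        (hF.mul_hasTemperateGrowth (hasTemperateGrowth_pd (ha' j) j)).integrable ht
    _ = -∑ j, ∫ x, pd (F t) j x * pd a j x := by
        simp only [hF.integral_mul_pd ht (ha' _), Finset.sum_neg_distrib]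

theorem UniformSchwartzOn.integral_mul_lap_lap (hF : UniformSchwartzOn K F) {t : ι} (ht : t ∈ K)
    {a : E6 → ℂ} (ha : Function.HasTemperateGrowth a) :
    ∫ x, F t x * lap (lap a) x = ∑ j, ∑ k, ∫ x, pd (pd (F t) j) k x * pd (pd a j) k x := by
  rw [hF.integral_mul_lap ht (hasTemperateGrowth_lap ha), ← Finset.sum_neg_distrib]
  refine Finset.sum_congr rfl fun j _ => ?_
  rw [← lap_pd ha.1, (hF.pd j).integral_mul_lap ht (hasTemperateGrowth_pd ha j), neg_neg]

theorem hasDerivAt_integral_mul_of_continuityEquation {K : Set ℝ} {ρ : ℝ → E6 → ℂ}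
    {P : Fin 6 → ℝ → E6 → ℂ} (hρ : UniformSchwartzOn K ρ) (hP : ∀ j, UniformSchwartzOn K (P j))
    {t : ℝ} (ht : K ∈ nhds t)
    (hcont : ∀ s ∈ K, ∀ x, HasDerivAt (fun r => ρ r x) (-∑ j, pd (P j s) j x) s)
    {a : E6 → ℂ} (ha : Function.HasTemperateGrowth a) :
    HasDerivAt (fun s => ∫ x, ρ s x * a x) (∑ j, ∫ x, P j t x * pd a j x) t := by
  have htK : t ∈ K := mem_of_mem_nhds ht
  have hdivP : UniformSchwartzOn K fun s x => -∑ j, pd (P j s) j x :=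
    (UniformSchwartzOn.sum fun j _ => (hP j).pd j).neg
  refine ((hρ.mul_hasTemperateGrowth ha).hasDerivAt_integral (hdivP.mul_hasTemperateGrowth ha) ht
    fun s hs x => (hcont s hs x).mul_const (a x)).congr_deriv ?_
  calc ∫ x, (-∑ j, pd (P j t) j x) * a x
      = ∫ x, ∑ j, -(pd (P j t) j x * a x) := by
        simp only [Finset.sum_neg_distrib, Finset.sum_mul, neg_mul]
    _ = ∑ j, ∫ x, -(pd (P j t) j x * a x) := integral_finsetSum _ fun j _ =>
        (((hP j).pd j).mul_hasTemperateGrowth ha).neg.integrable htK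
    _ = ∑ j, ∫ x, P j t x * pd a j x := by
        simp only [(hP _).integral_mul_pd htK ha, integral_neg]

end SchwartzCalculus

section LocalConservationLaws

/-- The mass current `2 Im (w̄ ∂ⱼw)` of `w`, as a complex number. -/
def massCurrent (w : E6 → ℂ) (j : Fin 6) (x : E6) : ℂ :=
  -Complex.I * (conj (w x) * pd w j x - w x * conj (pd w j x))

/-- The stress tensor of the free Schrödinger flow, `2 Re (∂ⱼw̄ ∂ₖw - w̄ ∂ⱼ∂ₖw)`. -/
def stressTensor (w : E6 → ℂ) (j k : Fin 6) (x : E6) : ℂ :=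
  conj (pd w j x) * pd w k x + pd w j x * conj (pd w k x)
    - conj (w x) * pd (pd w j) k x - w x * conj (pd (pd w j) k x)

/-- The momentum `2 Re (w̄ ∂ⱼN - N̄ ∂ⱼw)` that a forcing term `N` injects into `w` per unit time. -/
def forceDensity (w N : E6 → ℂ) (j : Fin 6) (x : E6) : ℂ :=
  conj (w x) * pd N j x - conj (N x) * pd w j x
    + w x * conj (pd N j x) - N x * conj (pd w j x)

variable {w : E6 → ℂ} {x : E6}

@[fun_prop]
theorem differentiable_massCurrent (hw : ContDiff ℝ ∞ w) (j : Fin 6) :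
    Differentiable ℝ (massCurrent w j) := by
  have hd : Differentiable ℝ w := hw.differentiable (by simp)
  unfold massCurrent
  fun_prop

@[fun_prop]
theorem differentiable_stressTensor (hw : ContDiff ℝ ∞ w) (j k : Fin 6) :
    Differentiable ℝ (stressTensor w j k) := by
  have hd : Differentiable ℝ w := hw.differentiable (by simp)
  unfold stressTensor
  fun_prop

theorem sum_pd_massCurrent (hw : ContDiff ℝ ∞ w) :
    ∑ j, pd (massCurrent w j) j x
      = -Complex.I * (conj (w x) * lap w x - w x * conj (lap w x)) := by
  have hd : Differentiable ℝ w := hw.differentiable (by simp)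
  calc ∑ j, pd (massCurrent w j) j x
      = ∑ j, -Complex.I * (conj (w x) * pd (pd w j) j x - w x * conj (pd (pd w j) j x)) := by
        refine Finset.sum_congr rfl fun j _ => ?_
        unfold massCurrent
        simp (disch := fun_prop) only [pd_const_mul, pd_sub, pd_mul, pd_conj]
        ring
    _ = _ := by
        simp only [← Finset.mul_sum, Finset.sum_sub_distrib, ← map_sum]
        rfl

theorem sum_pd_stressTensor (hw : ContDiff ℝ ∞ w) (j : Fin 6) :
    ∑ k, pd (stressTensor w j k) k x
      = conj (pd w j x) * lap w x + pd w j x * conj (lap w x)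
        - conj (w x) * pd (lap w) j x - w x * conj (pd (lap w) j x) := by
  have hd : Differentiable ℝ w := hw.differentiable (by simp)
  rw [← lap_pd hw]
  calc ∑ k, pd (stressTensor w j k) k x
      = ∑ k, (conj (pd w j x) * pd (pd w k) k x + pd w j x * conj (pd (pd w k) k x)
          - conj (w x) * pd (pd (pd w j) k) k x - w x * conj (pd (pd (pd w j) k) k x)) := by
        refine Finset.sum_congr rfl fun k _ => ?_
        unfold stressTensor
        simp (disch := fun_prop) only [pd_add, pd_sub, pd_mul, pd_conj]
        ring
    _ = _ := by
        simp only [← Finset.mul_sum, Finset.sum_add_distrib, Finset.sum_sub_distrib, ← map_sum]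
        rfl

/-- `w` is a smooth solution of the forced Schrödinger equation `i∂ₜw + κΔw + N = 0` on the time
set `I`, with the equation solved for `∂ₜw`. Both equations of the NLS system have this form. -/
structure IsForcedSchrodingerSol (κ : ℝ) (I : Set ℝ) (w N : ℝ → E6 → ℂ) : Prop where
  smooth : ContDiffOn ℝ ∞ (Function.uncurry w) (I ×ˢ Set.univ)
  differentiable_force : ∀ t ∈ I, Differentiable ℝ (N t)
  eqn : ∀ t ∈ I, ∀ x, deriv (w · x) t = Complex.I * (κ * lap (w t) x + N t x)

namespace IsForcedSchrodingerSol

variable {κ : ℝ} {I : Set ℝ} {w N : ℝ → E6 → ℂ} {t : ℝ}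

theorem contDiffAt_uncurry (hw : IsForcedSchrodingerSol κ I w N) (hI : IsOpen I) (ht : t ∈ I)
    (x : E6) : ContDiffAt ℝ ∞ (Function.uncurry w) (t, x) :=
  hw.smooth.contDiffAt ((hI.prod isOpen_univ).mem_nhds ⟨ht, trivial⟩)

theorem contDiff (hw : IsForcedSchrodingerSol κ I w N) (ht : t ∈ I) : ContDiff ℝ ∞ (w t) :=
  hw.smooth.comp_contDiff (contDiff_prodMk_right t) fun _ => ⟨ht, trivial⟩

theorem hasDerivAt (hw : IsForcedSchrodingerSol κ I w N) (hI : IsOpen I) (ht : t ∈ I) (x : E6) :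
    HasDerivAt (w · x) (Complex.I * (κ * lap (w t) x + N t x)) t := by
  rw [← hw.eqn t ht x]
  exact (hasDerivAt_left_of_differentiableAt_uncurry
    ((hw.contDiffAt_uncurry hI ht x).differentiableAt (by simp))).differentiableAt.hasDerivAt

theorem hasDerivAt_pd (hw : IsForcedSchrodingerSol κ I w N) (hI : IsOpen I) (ht : t ∈ I)
    (j : Fin 6) (x : E6) :
    HasDerivAt (fun s => pd (w s) j x)
      (Complex.I * (κ * pd (lap (w t)) j x + pd (N t) j x)) t := by
  have hwt : ContDiff ℝ ∞ (w t) := hw.contDiff ht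
  have hN : Differentiable ℝ (N t) := hw.differentiable_force t ht
  have hcomm := hasDerivAt_fderiv_apply ((hw.contDiffAt_uncurry hI ht x).of_le ENat.LEInfty.out)
    (EuclideanSpace.single j 1)
  rw [funext (hw.eqn t ht)] at hcomm
  refine hcomm.congr_deriv ?_
  change pd (fun y => Complex.I * (κ * lap (w t) y + N t y)) j x = _
  simp (disch := fun_prop) only [pd_const_mul, pd_add]

theorem hasDerivAt_mul_conj (hw : IsForcedSchrodingerSol κ I w N) (hI : IsOpen I) (ht : t ∈ I)
    (x : E6) :
    HasDerivAt (fun s => w s x * conj (w s x))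
      (-(κ * ∑ j, pd (massCurrent (w t) j) j x)
        + Complex.I * (N t x * conj (w t x) - w t x * conj (N t x))) t := by
  have hwt := hw.hasDerivAt hI ht x
  refine (hwt.mul hwt.star).congr_deriv ?_
  rw [sum_pd_massCurrent (hw.contDiff ht)]
  simp only [Complex.star_def, map_mul, map_add, Complex.conj_I, Complex.conj_ofReal]
  ring

theorem hasDerivAt_massCurrent (hw : IsForcedSchrodingerSol κ I w N) (hI : IsOpen I) (ht : t ∈ I)
    (j : Fin 6) (x : E6) :
    HasDerivAt (fun s => massCurrent (w s) j x)
      (-(κ * ∑ k, pd (stressTensor (w t) j k) k x) + forceDensity (w t) (N t) j x) t := by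
  have hwt := hw.hasDerivAt hI ht x
  have hpd := hw.hasDerivAt_pd hI ht j x
  refine (((hwt.star.mul hpd).sub (hwt.mul hpd.star)).const_mul (-Complex.I)).congr_deriv ?_
  rw [sum_pd_stressTensor (hw.contDiff ht), forceDensity]
  simp only [Complex.star_def, map_mul, map_add, Complex.conj_I, Complex.conj_ofReal]
  linear_combination (conj (w t x) * (κ * pd (lap (w t)) j x + pd (N t) j x)
    - (κ * conj (lap (w t) x) + conj (N t x)) * pd (w t) j x
    + w t x * (κ * conj (pd (lap (w t)) j x) + conj (pd (N t) j x))
    - (κ * lap (w t) x + N t x) * conj (pd (w t) j x)) * -Complex.I_mul_I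

end IsForcedSchrodingerSol

/-- The Hessian form of a weight `a` evaluated at `∇w`, namely `∑ⱼₖ ∂ⱼw̄ ∂ₖw ∂ₖ∂ⱼa`. It is the
density left over when the stress tensor is paired with the Hessian of `a`. -/
def hessianForm (a w : E6 → ℂ) (x : E6) : ℂ :=
  ∑ j, ∑ k, conj (pd w j x) * pd w k x * pd (pd a j) k x

theorem stressTensor_eq_sub_pd_pd (hw : ContDiff ℝ ∞ w) (j k : Fin 6) :
    stressTensor w j k x
      = 2 * (conj (pd w j x) * pd w k x) + 2 * (conj (pd w k x) * pd w j x)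
        - pd (pd (fun y => w y * conj (w y)) j) k x := by
  have hd : Differentiable ℝ w := hw.differentiable (by simp)
  have pd_density : pd (fun y => w y * conj (w y)) j
      = fun y => w y * conj (pd w j y) + conj (w y) * pd w j y := by
    funext y
    simp (disch := fun_prop) only [pd_mul, pd_conj]
  simp (disch := fun_prop) only [pd_density, stressTensor, pd_add, pd_mul, pd_conj]
  ring

section Schwartz

variable {ι : Type*} {K : Set ι} {w : ι → E6 → ℂ}

protected theorem UniformSchwartzOn.massCurrent (hw : UniformSchwartzOn K w) (j : Fin 6) :
    UniformSchwartzOn K fun t => massCurrent (w t) j :=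
  ((hw.conj.mul (hw.pd j)).sub (hw.mul (hw.pd j).conj)).const_mul _

protected theorem UniformSchwartzOn.stressTensor (hw : UniformSchwartzOn K w) (j k : Fin 6) :
    UniformSchwartzOn K fun t => stressTensor (w t) j k :=
  ((((hw.pd j).conj.mul (hw.pd k)).add ((hw.pd j).mul (hw.pd k).conj)).sub
    (hw.conj.mul ((hw.pd j).pd k))).sub (hw.mul ((hw.pd j).pd k).conj)

protected theorem UniformSchwartzOn.hessianForm (hw : UniformSchwartzOn K w) {a : E6 → ℂ}
    (ha : Function.HasTemperateGrowth a) : UniformSchwartzOn K fun t => hessianForm a (w t) :=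
  UniformSchwartzOn.sum fun j _ => UniformSchwartzOn.sum fun k _ =>
    ((hw.pd j).conj.mul (hw.pd k)).mul_hasTemperateGrowth
      (hasTemperateGrowth_pd (hasTemperateGrowth_pd ha j) k)

theorem UniformSchwartzOn.sum_integral_stressTensor_mul (hw : UniformSchwartzOn K w) {t : ι}
    (ht : t ∈ K) {a : E6 → ℂ} (ha : Function.HasTemperateGrowth a) :
    ∑ j, ∑ k, ∫ x, stressTensor (w t) j k x * pd (pd a j) k x
      = 4 * (∫ x, hessianForm a (w t) x)
        - ∫ x, w t x * conj (w t x) * lap (lap a) x := by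
  have ha' (j k : Fin 6) := hasTemperateGrowth_pd (hasTemperateGrowth_pd ha j) k
  have hρ : UniformSchwartzOn K fun s x => w s x * conj (w s x) := hw.mul hw.conj
  have hgrad (i l j k : Fin 6) :
      Integrable fun x => conj (pd (w t) i x) * pd (w t) l x * pd (pd a j) k x :=
    (((hw.pd i).conj.mul (hw.pd l)).mul_hasTemperateGrowth (ha' j k)).integrable ht
  have integral_hessianForm : ∫ x, hessianForm a (w t) x
      = ∑ j, ∑ k, ∫ x, conj (pd (w t) j x) * pd (w t) k x * pd (pd a j) k x := by
    unfold hessianForm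
    rw [integral_finsetSum _ fun j _ => integrable_finsetSum _ fun k _ => hgrad j k j k]
    exact Finset.sum_congr rfl fun j _ => integral_finsetSum _ fun k _ => hgrad j k j k
  have symm_hessian : ∑ j, ∑ k, ∫ x, conj (pd (w t) k x) * pd (w t) j x * pd (pd a j) k x
      = ∑ j, ∑ k, ∫ x, conj (pd (w t) j x) * pd (w t) k x * pd (pd a j) k x := by
    rw [Finset.sum_comm]
    simp only [fun j k => pd_comm (ha.1.of_le ENat.LEInfty.out) k j]
  have integral_stressTensor (j k : Fin 6) :
      ∫ x, stressTensor (w t) j k x * pd (pd a j) k x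
        = 2 * (∫ x, conj (pd (w t) j x) * pd (w t) k x * pd (pd a j) k x)
          + 2 * (∫ x, conj (pd (w t) k x) * pd (w t) j x * pd (pd a j) k x)
          - ∫ x, pd (pd (fun y => w t y * conj (w t y)) j) k x * pd (pd a j) k x := by
    rw [← integral_const_mul, ← integral_const_mul, ← integral_add (by fun_prop) (by fun_prop),
      ← integral_sub (by fun_prop)
        ((((hρ.pd j).pd k).mul_hasTemperateGrowth (ha' j k)).integrable ht)]
    refine integral_congr_ae (.of_forall fun x => ?_)
    simp only [stressTensor_eq_sub_pd_pd (hw.contDiff t ht)]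
    ring
  simp only [integral_stressTensor, Finset.sum_sub_distrib, Finset.sum_add_distrib,
    ← Finset.mul_sum, symm_hessian, integral_hessianForm, ← hρ.integral_mul_lap_lap ht ha]
  ring

end Schwartz

end LocalConservationLaws

section QuadraticNLS

/-- The density of the total mass `∫ |u|² + |v|²` of the system. -/
def massDensity (u v : E6 → ℂ) (x : E6) : ℂ := u x * conj (u x) + v x * conj (v x)

/-- The total mass current of the system. At mass resonance it is also twice the momentum density of
`Pmom`. -/
def momentumDensity (κ : ℝ) (u v : E6 → ℂ) (j : Fin 6) (x : E6) : ℂ :=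
  massCurrent u j x + κ * massCurrent v j x

/-- The potential energy density `Re (v̄ u²)`, whose integral is `Ren u v`. -/
def interactionDensity (u v : E6 → ℂ) (x : E6) : ℂ :=
  1 / 2 * (conj (v x) * u x ^ 2 + v x * conj (u x) ^ 2)

/-- The stress tensor of the system; the interaction contributes the pressure `-Re (v̄ u²)`. -/
def nlsStress (κ : ℝ) (u v : E6 → ℂ) (j k : Fin 6) (x : E6) : ℂ :=
  stressTensor u j k x + κ ^ 2 * stressTensor v j k x
    - (if j = k then 1 else 0) * interactionDensity u v x

section LocalIdentities

variable {u v : E6 → ℂ}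

@[fun_prop]
theorem differentiable_interactionDensity (hu : Differentiable ℝ u) (hv : Differentiable ℝ v) :
    Differentiable ℝ (interactionDensity u v) := by
  unfold interactionDensity
  fun_prop

theorem sum_pd_momentumDensity (hu : ContDiff ℝ ∞ u) (hv : ContDiff ℝ ∞ v) (κ : ℝ) (x : E6) :
    ∑ j, pd (momentumDensity κ u v j) j x
      = ∑ j, pd (massCurrent u j) j x + κ * ∑ j, pd (massCurrent v j) j x := by
  unfold momentumDensity
  simp (disch := fun_prop) only [pd_add, pd_const_mul, Finset.sum_add_distrib, ← Finset.mul_sum]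

theorem sum_pd_nlsStress (hu : ContDiff ℝ ∞ u) (hv : ContDiff ℝ ∞ v) (κ : ℝ) (j : Fin 6)
    (x : E6) :
    ∑ k, pd (nlsStress κ u v j k) k x
      = ∑ k, pd (stressTensor u j k) k x + κ ^ 2 * ∑ k, pd (stressTensor v j k) k x
        - pd (interactionDensity u v) j x := by
  have hud : Differentiable ℝ u := hu.differentiable (by simp)
  have hvd : Differentiable ℝ v := hv.differentiable (by simp)
  have pd_nlsStress (k : Fin 6) : pd (nlsStress κ u v j k) k x
      = pd (stressTensor u j k) k x + κ ^ 2 * pd (stressTensor v j k) k x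
        - (if j = k then 1 else 0) * pd (interactionDensity u v) k x := by
    unfold nlsStress
    simp (disch := fun_prop) only [pd_sub, pd_add, pd_const_mul]
  simp only [pd_nlsStress, Finset.sum_sub_distrib, Finset.sum_add_distrib, ← Finset.mul_sum,
    ite_mul, one_mul, zero_mul, Finset.sum_ite_eq, Finset.mem_univ, if_true]

/-- At mass resonance the forces exerted by the quadratic terms combine to a gradient. -/
theorem forceDensity_add_half_forceDensity (hu : Differentiable ℝ u)
    (hv : Differentiable ℝ v) (j : Fin 6) (x : E6) :
    forceDensity u (fun y => v y * conj (u y)) j x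
        + 1 / 2 * forceDensity v (fun y => u y ^ 2) j x
      = pd (interactionDensity u v) j x := by
  unfold interactionDensity
  simp (disch := fun_prop) only [forceDensity, sq, pd_const_mul, pd_add, pd_mul, pd_conj, map_mul,
    map_add, Complex.conj_conj]
  ring

end LocalIdentities

section Schwartz

variable {ι : Type*} {K : Set ι} {u v : ι → E6 → ℂ}

protected theorem UniformSchwartzOn.massDensity (hu : UniformSchwartzOn K u)
    (hv : UniformSchwartzOn K v) : UniformSchwartzOn K fun t => massDensity (u t) (v t) :=
  (hu.mul hu.conj).add (hv.mul hv.conj)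

protected theorem UniformSchwartzOn.momentumDensity (hu : UniformSchwartzOn K u)
    (hv : UniformSchwartzOn K v) (κ : ℝ) (j : Fin 6) :
    UniformSchwartzOn K fun t => momentumDensity κ (u t) (v t) j :=
  (hu.massCurrent j).add ((hv.massCurrent j).const_mul _)

protected theorem UniformSchwartzOn.interactionDensity (hu : UniformSchwartzOn K u)
    (hv : UniformSchwartzOn K v) :
    UniformSchwartzOn K fun t => interactionDensity (u t) (v t) := by
  unfold interactionDensity
  simp only [sq]
  exact ((hv.conj.mul (hu.mul hu)).add (hv.mul (hu.conj.mul hu.conj))).const_mul _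

protected theorem UniformSchwartzOn.nlsStress (hu : UniformSchwartzOn K u)
    (hv : UniformSchwartzOn K v) (κ : ℝ) (j k : Fin 6) :
    UniformSchwartzOn K fun t => nlsStress κ (u t) (v t) j k :=
  ((hu.stressTensor j k).add ((hv.stressTensor j k).const_mul _)).sub
    ((hu.interactionDensity hv).const_mul _)

theorem UniformSchwartzOn.integral_nlsStress_mul (hu : UniformSchwartzOn K u)
    (hv : UniformSchwartzOn K v) {t : ι} (ht : t ∈ K) {b : E6 → ℂ}
    (hb : Function.HasTemperateGrowth b) (κ : ℝ) (j k : Fin 6) :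
    ∫ x, nlsStress κ (u t) (v t) j k x * b x
      = (∫ x, stressTensor (u t) j k x * b x) + κ ^ 2 * (∫ x, stressTensor (v t) j k x * b x)
        - (if j = k then 1 else 0) * ∫ x, interactionDensity (u t) (v t) x * b x := by
  have hTu := ((hu.stressTensor j k).mul_hasTemperateGrowth hb).integrable (μ := volume) ht
  have hTv := ((hv.stressTensor j k).mul_hasTemperateGrowth hb).integrable (μ := volume) ht
  have hR := ((hu.interactionDensity hv).mul_hasTemperateGrowth hb).integrable (μ := volume) ht
  rw [← integral_const_mul, ← integral_const_mul, ← integral_add hTu (hTv.const_mul _),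
    ← integral_sub (by fun_prop) (hR.const_mul _)]
  simp only [nlsStress, add_mul, sub_mul, mul_assoc]

theorem UniformSchwartzOn.sum_integral_nlsStress_mul (hu : UniformSchwartzOn K u)
    (hv : UniformSchwartzOn K v) {t : ι} (ht : t ∈ K) {a : E6 → ℂ}
    (ha : Function.HasTemperateGrowth a) (κ : ℝ) :
    ∑ j, ∑ k, ∫ x, nlsStress κ (u t) (v t) j k x * pd (pd a j) k x
      = 4 * (∫ x, (hessianForm a (u t) x + κ ^ 2 * hessianForm a (v t) x))
        - (∫ x, (u t x * conj (u t x) * lap (lap a) x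
            + κ ^ 2 * (v t x * conj (v t x) * lap (lap a) x)))
        - ∫ x, interactionDensity (u t) (v t) x * lap a x := by
  have hΔ := hasTemperateGrowth_lap (hasTemperateGrowth_lap ha)
  have hR := hu.interactionDensity hv
  have integral_pressure :
      ∑ j, ∫ x, interactionDensity (u t) (v t) x * pd (pd a j) j x
        = ∫ x, interactionDensity (u t) (v t) x * lap a x := by
    rw [hR.integral_mul_lap ht ha, ← Finset.sum_neg_distrib]
    exact Finset.sum_congr rfl fun j _ => hR.integral_mul_pd ht (hasTemperateGrowth_pd ha j) j
  rw [integral_add ((hu.hessianForm ha).integrable ht)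
      (((hv.hessianForm ha).integrable ht).const_mul _),
    integral_add (((hu.mul hu.conj).mul_hasTemperateGrowth hΔ).integrable ht)
      ((((hv.mul hv.conj).mul_hasTemperateGrowth hΔ).integrable ht).const_mul _),
    integral_const_mul, integral_const_mul]
  simp only [hu.integral_nlsStress_mul hv ht
      (hasTemperateGrowth_pd (hasTemperateGrowth_pd ha _) _),
    Finset.sum_sub_distrib, Finset.sum_add_distrib, ← Finset.mul_sum,
    hu.sum_integral_stressTensor_mul ht ha, hv.sum_integral_stressTensor_mul ht ha,
    ite_mul, one_mul, zero_mul, Finset.sum_ite_eq, Finset.mem_univ, if_true, integral_pressure]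
  ring

end Schwartz

namespace IsClassicalSol

variable {κ : ℝ} {I : Set ℝ} {u v : ℝ → E6 → ℂ} {t : ℝ}

theorem forced_u (hsol : IsClassicalSol κ I u v) :
    IsForcedSchrodingerSol 1 I u fun t x => v t x * conj (u t x) where
  smooth := hsol.smooth.fst
  differentiable_force t ht :=
    ((hsol.schwartz_v t ht).1.mul (contDiff_conj_comp (hsol.schwartz_u t ht).1)).differentiable
      (by simp)
  eqn t ht x := by
    push_cast
    linear_combination -Complex.I * hsol.eqn_u t ht x + deriv (u · x) t * Complex.I_mul_I

theorem forced_v (hsol : IsClassicalSol κ I u v) :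
    IsForcedSchrodingerSol κ I v fun t x => u t x ^ 2 where
  smooth := hsol.smooth.snd
  differentiable_force t ht := ((hsol.schwartz_u t ht).1.pow 2).differentiable (by simp)
  eqn t ht x := by
    linear_combination -Complex.I * hsol.eqn_v t ht x + deriv (v · x) t * Complex.I_mul_I

theorem exists_uniformSchwartzOn (hsol : IsClassicalSol κ I u v) (hI : IsOpen I) (ht : t ∈ I) :
    ∃ K ∈ nhds t, K ⊆ I ∧ UniformSchwartzOn K u ∧ UniformSchwartzOn K v := by
  obtain ⟨K, hK, hKI, hKcompact⟩ := local_compact_nhds (hI.mem_nhds ht)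
  have hbounds := hsol.bounds K hKI hKcompact
  exact ⟨K, hK, hKI,
    ⟨fun s hs => (hsol.schwartz_u s (hKI hs)).1,
      fun k n => (hbounds k n).imp fun _ hC s hs x => (hC s hs x).1⟩,
    ⟨fun s hs => (hsol.schwartz_v s (hKI hs)).1,
      fun k n => (hbounds k n).imp fun _ hC s hs x => (hC s hs x).2⟩⟩

theorem hasDerivAt_massDensity (hsol : IsClassicalSol κ I u v) (hI : IsOpen I) (ht : t ∈ I)
    (x : E6) :
    HasDerivAt (fun s => massDensity (u s) (v s) x)
      (-∑ j, pd (momentumDensity κ (u t) (v t) j) j x) t := by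
  refine ((hsol.forced_u.hasDerivAt_mul_conj hI ht x).add
    (hsol.forced_v.hasDerivAt_mul_conj hI ht x)).congr_deriv ?_
  rw [sum_pd_momentumDensity (hsol.forced_u.contDiff ht) (hsol.forced_v.contDiff ht)]
  simp only [map_mul, map_pow, Complex.conj_conj, Complex.ofReal_one]
  ring

theorem hasDerivAt_momentumDensity (hsol : IsClassicalSol (1 / 2) I u v) (hI : IsOpen I)
    (ht : t ∈ I) (j : Fin 6) (x : E6) :
    HasDerivAt (fun s => momentumDensity (1 / 2) (u s) (v s) j x)
      (-∑ k, pd (nlsStress (1 / 2) (u t) (v t) j k) k x) t := by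
  have hu : ContDiff ℝ ∞ (u t) := hsol.forced_u.contDiff ht
  have hv : ContDiff ℝ ∞ (v t) := hsol.forced_v.contDiff ht
  refine ((hsol.forced_u.hasDerivAt_massCurrent hI ht j x).add
    ((hsol.forced_v.hasDerivAt_massCurrent hI ht j x).const_mul _)).congr_deriv ?_
  rw [sum_pd_nlsStress hu hv, ← forceDensity_add_half_forceDensity (hu.differentiable (by simp))
    (hv.differentiable (by simp))]
  push_cast
  ring

theorem hasDerivAt_integral_massDensity_mul (hsol : IsClassicalSol κ I u v) (hI : IsOpen I)
    (ht : t ∈ I) {a : E6 → ℂ} (ha : Function.HasTemperateGrowth a) :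
    HasDerivAt (fun s => ∫ x, massDensity (u s) (v s) x * a x)
      (∑ j, ∫ x, momentumDensity κ (u t) (v t) j x * pd a j x) t := by
  obtain ⟨K, hK, hKI, hu, hv⟩ := hsol.exists_uniformSchwartzOn hI ht
  exact hasDerivAt_integral_mul_of_continuityEquation (hu.massDensity hv)
    (hu.momentumDensity hv κ) hK (fun s hs => hsol.hasDerivAt_massDensity hI (hKI hs)) ha

theorem hasDerivAt_sum_integral_momentumDensity_mul (hsol : IsClassicalSol (1 / 2) I u v)
    (hI : IsOpen I) (ht : t ∈ I) {a : E6 → ℂ} (ha : Function.HasTemperateGrowth a) :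
    HasDerivAt (fun s => ∑ j, ∫ x, momentumDensity (1 / 2) (u s) (v s) j x * pd a j x)
      (∑ j, ∑ k, ∫ x, nlsStress (1 / 2) (u t) (v t) j k x * pd (pd a j) k x) t := by
  obtain ⟨K, hK, hKI, hu, hv⟩ := hsol.exists_uniformSchwartzOn hI ht
  exact HasDerivAt.fun_sum fun j _ => hasDerivAt_integral_mul_of_continuityEquation
    (hu.momentumDensity hv _ j) (hu.nlsStress hv _ j) hK
    (fun s hs => hsol.hasDerivAt_momentumDensity hI (hKI hs) j) (hasTemperateGrowth_pd ha j)

end IsClassicalSol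

section RealWeight

theorem massDensity_eq_ofReal (u v : E6 → ℂ) (x : E6) :
    massDensity u v x = ((‖u x‖ ^ 2 + ‖v x‖ ^ 2 : ℝ) : ℂ) := by
  simp only [massDensity, Complex.mul_conj']
  push_cast
  rfl

theorem interactionDensity_eq_ofReal_re (u v : E6 → ℂ) (x : E6) :
    interactionDensity u v x = ((conj (v x) * u x ^ 2).re : ℂ) := by
  rw [Complex.re_eq_add_conj, interactionDensity]
  simp only [map_mul, map_pow, Complex.conj_conj]
  ring

theorem hessianForm_ofReal {a : E6 → ℝ} (ha : ContDiff ℝ ∞ a) (w : E6 → ℂ) (x : E6) :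
    hessianForm (fun y => (a y : ℂ)) w x
      = ∑ j, ∑ k, conj (pd w j x) * pd w k x * (pd2R a j k x : ℂ) := by
  have ha' : ContDiff ℝ ∞ fun y => (a y : ℂ) := Complex.ofRealCLM.contDiff.comp ha
  have pd_pd_eq_pd2R (j k : Fin 6) :
      pd (pd (fun y => (a y : ℂ)) j) k x = (pd2R a j k x : ℂ) := by
    rw [pd_comm (ha'.of_le ENat.LEInfty.out), pd_ofReal (ha.differentiable (by simp)),
      pd_ofReal (differentiable_pdR ha k)]
    rfl
  simp only [hessianForm, pd_pd_eq_pd2R]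

theorem UniformSchwartzOn.re_integral_interactionDensity_mul {ι : Type*} {K : Set ι}
    {u v : ι → E6 → ℂ} (hu : UniformSchwartzOn K u) (hv : UniformSchwartzOn K v) {t : ι}
    (ht : t ∈ K) {b : E6 → ℝ} (hb : Function.HasTemperateGrowth fun x => (b x : ℂ)) :
    (∫ x, interactionDensity (u t) (v t) x * (b x : ℂ)).re
      = (∫ x, conj (v t x) * u t x ^ 2 * (b x : ℂ)).re := by
  have hf_int : Integrable fun x => conj (v t x) * u t x ^ 2 * (b x : ℂ) := by
    simpa only [sq] using ((hv.conj.mul (hu.mul hu)).mul_hasTemperateGrowth hb).integrable ht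
  calc (∫ x, interactionDensity (u t) (v t) x * (b x : ℂ)).re
      = ∫ x, (conj (v t x) * u t x ^ 2 * (b x : ℂ)).re := by
        simp only [interactionDensity_eq_ofReal_re, ← Complex.ofReal_mul, integral_complex_ofReal,
          Complex.ofReal_re, Complex.re_mul_ofReal]
    _ = _ := integral_re hf_int

theorem UniformSchwartzOn.re_sum_integral_nlsStress_mul {ι : Type*} {K : Set ι}
    {u v : ι → E6 → ℂ} (hu : UniformSchwartzOn K u) (hv : UniformSchwartzOn K v) {t : ι}
    (ht : t ∈ K) {a : E6 → ℝ} (ha : Function.HasTemperateGrowth fun x => (a x : ℂ)) (κ : ℝ) :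
    (∑ j, ∑ k, ∫ x, nlsStress κ (u t) (v t) j k x * pd (pd (fun y => (a y : ℂ)) j) k x).re
      = 4 * (∫ x, ∑ j, ∑ k, (conj (pd (u t) j x) * pd (u t) k x
            + κ ^ 2 * conj (pd (v t) j x) * pd (v t) k x) * (pd2R a j k x : ℂ)).re
        - (∫ x, (‖u t x‖ ^ 2 + κ ^ 2 * ‖v t x‖ ^ 2) * lapR (lapR a) x)
        - (∫ x, conj (v t x) * u t x ^ 2 * (lapR a x : ℂ)).re := by
  have ha_smooth : ContDiff ℝ ∞ a := Complex.reCLM.contDiff.comp ha.1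
  have hlap := hasTemperateGrowth_lap ha
  rw [lap_ofReal ha_smooth] at hlap
  have hessian_eq (x : E6) :
      hessianForm (fun y => (a y : ℂ)) (u t) x + κ ^ 2 * hessianForm (fun y => (a y : ℂ)) (v t) x
        = ∑ j, ∑ k, (conj (pd (u t) j x) * pd (u t) k x
            + κ ^ 2 * conj (pd (v t) j x) * pd (v t) k x) * (pd2R a j k x : ℂ) := by
    simp only [hessianForm_ofReal ha_smooth, Finset.mul_sum, ← Finset.sum_add_distrib]
    exact Finset.sum_congr rfl fun j _ => Finset.sum_congr rfl fun k _ => by ring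
  have density_eq (x : E6) :
      u t x * conj (u t x) * (lapR (lapR a) x : ℂ)
          + κ ^ 2 * (v t x * conj (v t x) * (lapR (lapR a) x : ℂ))
        = (((‖u t x‖ ^ 2 + κ ^ 2 * ‖v t x‖ ^ 2) * lapR (lapR a) x : ℝ) : ℂ) := by
    simp only [Complex.mul_conj']
    push_cast
    ring
  rw [hu.sum_integral_nlsStress_mul hv ht ha, lap_ofReal ha_smooth,
    lap_ofReal (contDiff_lapR ha_smooth)]
  simp only [hessian_eq, density_eq, integral_complex_ofReal, Complex.sub_re, Complex.ofReal_re,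
    hu.re_integral_interactionDensity_mul hv ht hlap]
  rw [show (4 : ℂ) = ((4 : ℝ) : ℂ) by norm_num, Complex.re_ofReal_mul]

theorem IsClassicalSol.deriv_deriv_integral_mass_mul {I : Set ℝ} {u v : ℝ → E6 → ℂ}
    (hsol : IsClassicalSol (1 / 2) I u v) (hI : IsOpen I) {t : ℝ} (ht : t ∈ I) {a : E6 → ℝ}
    (ha : Function.HasTemperateGrowth fun x => (a x : ℂ)) :
    deriv (deriv fun s => ∫ x, (‖u s x‖ ^ 2 + ‖v s x‖ ^ 2) * a x) t
      = (∑ j, ∑ k, ∫ x, nlsStress (1 / 2) (u t) (v t) j k x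
          * pd (pd (fun y => (a y : ℂ)) j) k x).re := by
  have mass_eq_re (s : ℝ) : ∫ x, (‖u s x‖ ^ 2 + ‖v s x‖ ^ 2) * a x
      = (∫ x, massDensity (u s) (v s) x * (a x : ℂ)).re := by
    simp only [massDensity_eq_ofReal, ← Complex.ofReal_mul, integral_complex_ofReal,
      Complex.ofReal_re]
  have deriv_mass : deriv (fun s => ∫ x, (‖u s x‖ ^ 2 + ‖v s x‖ ^ 2) * a x) =ᶠ[nhds t]
      fun s => (∑ j, ∫ x, momentumDensity (1 / 2) (u s) (v s) j x
        * pd (fun y => (a y : ℂ)) j x).re := by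
    filter_upwards [hI.mem_nhds ht] with s hs
    simp only [mass_eq_re]
    exact (Complex.reCLM.hasFDerivAt.comp_hasDerivAt s
      (hsol.hasDerivAt_integral_massDensity_mul hI hs ha)).deriv
  rw [deriv_mass.deriv_eq]
  exact (Complex.reCLM.hasFDerivAt.comp_hasDerivAt t
    (hsol.hasDerivAt_sum_integral_momentumDensity_mul hI ht ha)).deriv

end RealWeight

end QuadraticNLS

/-- second Virial identity. For a classical solution of the mass-resonance
(`κ = 1/2`) quadratic NLS system and a smooth polynomially growing weight `a`,
`(d²/dt²) ∫ (|u|²+|v|²) a = 4 Re ∫ Σ_{j,k} (∂_j conj(u) ∂_k u + (1/4) ∂_j conj(v) ∂_k v) ∂_j∂_k a`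
`− ∫ (|u|² + (1/4)|v|²) Δ²a − Re ∫ conj(v) u² Δa`. -/
theorem virial_second (I : Set ℝ) (hI : IsOpen I) (u v : ℝ → E6 → ℂ)
    (hsol : IsClassicalSol (1 / 2) I u v)
    (a : E6 → ℝ) (ha : Function.HasTemperateGrowth a) :
    ∀ t ∈ I,
      deriv (deriv (fun s => ∫ x : E6, (‖u s x‖ ^ 2 + ‖v s x‖ ^ 2) * a x)) t
        = 4 * (∫ x : E6, ∑ j : Fin 6, ∑ k : Fin 6,
              ((starRingEnd ℂ) (pd (u t) j x) * pd (u t) k x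
                + (1 / 4 : ℂ) * (starRingEnd ℂ) (pd (v t) j x) * pd (v t) k x)
                * ((pd2R a j k x : ℝ) : ℂ)).re
          - (∫ x : E6, (‖u t x‖ ^ 2 + (1 / 4) * ‖v t x‖ ^ 2) * lapR (lapR a) x)
          - (∫ x : E6, (starRingEnd ℂ) (v t x) * (u t x) ^ 2 * ((lapR a x : ℝ) : ℂ)).re := by
  intro t ht
  have ha' : Function.HasTemperateGrowth fun x => (a x : ℂ) :=
    Function.Complex.hasTemperateGrowth_ofReal.comp ha
  obtain ⟨K, hK, -, hu, hv⟩ := hsol.exists_uniformSchwartzOn hI ht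
  rw [hsol.deriv_deriv_integral_mass_mul hI ht ha',
    hu.re_sum_integral_nlsStress_mul hv (mem_of_mem_nhds hK) ha']
  norm_num
end
end

section
/- Let κ = 1/2 and let (u, v) be a classical solution of the quadratic NLS system on an open interval I. Define the variance V(t) = ∫_{ℝ⁶} |x|² (|u(t,x)|² + |v(t,x)|²) dx. Then V is twice differentiable on I and V''(t) = 4·(2H(u(t),v(t)) − 3R(u(t),v(t))) for all t ∈ I. -/
open MeasureTheory Real Filter

noncomputable section

/-! Let `Λ = x · ∇` and let `A = -i (Λ + n / 2)` be the symmetric generator of dilations.  Since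
`[Δ, |x|²] = 4 Λ + 2 n`, the first derivative of the variance is
`4 (⟨u, A u⟩ + κ ⟨v, A v⟩)`, plus the nonlinear contributions `∓ 2 Im ∫ |x|² conj(v) u²` of the two
equations, which cancel.  Since `[Δ, Λ] = 2 Δ`, the linear part of the next derivative is kinetic
(Pohozaev's identity).  Its nonlinear part involves `2 ⟨v conj(u), Λ u⟩ = ⟨v, Λ (u²)⟩` and
`⟨u², Λ v⟩`; after integration by parts these combine with total coefficient `1 - 2 κ`, so at mass
resonance `κ = 1 / 2` only a multiple of `∫ conj(v) u²` remains. -/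

open scoped ContDiff Topology InnerProductSpace SchwartzMap LineDeriv Laplacian

section LineDeriv

variable {E F : Type*} [NormedAddCommGroup E] [NormedSpace ℝ E]
  [NormedAddCommGroup F] [NormedSpace ℝ F]

theorem lineDerivOp_comm (v w : E) (f : 𝓢(E, F)) : ∂_{v} (∂_{w} f) = ∂_{w} (∂_{v} f) := by
  ext x
  have hdiff : DifferentiableAt ℝ (fderiv ℝ f) x :=
    (SchwartzMap.fderivCLM ℝ E F f).differentiableAt
  have hsymm : IsSymmSndFDerivAt ℝ f x :=
    (f.smooth 2).contDiffAt.isSymmSndFDerivAt (by simp [minSmoothness_of_isRCLikeNormedField])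
  have hsnd (a b : E) : ∂_{a} (∂_{b} f) x = fderiv ℝ (fderiv ℝ f) x a b := by
    change fderiv ℝ (fun y ↦ fderiv ℝ f y b) x a = _
    rw [fderiv_clm_apply hdiff (differentiableAt_const b)]
    simp
  rw [hsnd, hsnd, hsymm.eq]

theorem lineDerivOp_smulLeftCLM {g g' : E → ℝ} {v : E} (hg : g.HasTemperateGrowth)
    (hg' : g'.HasTemperateGrowth) (hderiv : ∀ x, fderiv ℝ g x v = g' x) (f : 𝓢(E, F)) :
    ∂_{v} (SchwartzMap.smulLeftCLM F g f) =
      SchwartzMap.smulLeftCLM F g' f + SchwartzMap.smulLeftCLM F g (∂_{v} f) := by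
  ext x
  have hprod : HasFDerivAt (fun y ↦ g y • f y) _ x :=
    (hg.1.differentiable (by simp) x).hasFDerivAt.smul (f.hasFDerivAt x)
  rw [SchwartzMap.lineDerivOp_apply_eq_fderiv, SchwartzMap.smulLeftCLM_apply hg, hprod.fderiv]
  simp [hg, hg', hderiv, SchwartzMap.lineDerivOp_apply_eq_fderiv, add_comm]

variable (E F) in
/-- The Euler operator `Λ = x · ∇` on Schwartz functions, the generator of dilations. -/
def eulerCLM : 𝓢(E, F) →L[ℝ] 𝓢(E, F) :=
  SchwartzMap.bilinLeftCLM (ContinuousLinearMap.id ℝ (E →L[ℝ] F)) .id ∘L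
    SchwartzMap.fderivCLM ℝ E F

@[simp]
theorem eulerCLM_apply (f : 𝓢(E, F)) (x : E) : eulerCLM E F f x = fderiv ℝ f x x := rfl

end LineDeriv

section Operators

variable {E F : Type*} [NormedAddCommGroup E] [InnerProductSpace ℝ E]
  [NormedAddCommGroup F] [NormedSpace ℝ F]

variable (F) in
/-- Multiplication of Schwartz functions by the linear functional `⟪v, ·⟫`, the position operator
in direction `v`. -/
def positionCLM (v : E) : 𝓢(E, F) →L[ℝ] 𝓢(E, F) := SchwartzMap.smulLeftCLM F (inner ℝ v)

variable (E F) in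
/-- Multiplication of Schwartz functions by `‖x‖ ^ 2`, the weight in the variance. -/
def normSqCLM : 𝓢(E, F) →L[ℝ] 𝓢(E, F) := SchwartzMap.smulLeftCLM F (fun x ↦ ‖x‖ ^ 2)

@[simp]
theorem positionCLM_apply (v : E) (f : 𝓢(E, F)) (x : E) : positionCLM F v f x = ⟪v, x⟫_ℝ • f x :=
  SchwartzMap.smulLeftCLM_apply_apply (by fun_prop) f x

@[simp]
theorem normSqCLM_apply (f : 𝓢(E, F)) (x : E) : normSqCLM E F f x = ‖x‖ ^ 2 • f x :=
  SchwartzMap.smulLeftCLM_apply_apply (by fun_prop) f x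

theorem lineDerivOp_positionCLM (v w : E) (f : 𝓢(E, F)) :
    ∂_{v} (positionCLM F w f) = ⟪w, v⟫_ℝ • f + positionCLM F w (∂_{v} f) := by
  have hfderiv (x : E) : fderiv ℝ (inner ℝ w) x v = ⟪w, v⟫_ℝ :=
    DFunLike.congr_fun (innerSL ℝ w).fderiv v
  simpa [positionCLM] using lineDerivOp_smulLeftCLM (by fun_prop) (.const _) hfderiv f

theorem lineDerivOp_normSqCLM (v : E) (f : 𝓢(E, F)) :
    ∂_{v} (normSqCLM E F f) = (2 : ℝ) • positionCLM F v f + normSqCLM E F (∂_{v} f) := by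
  have htemp : (inner ℝ v : E → ℝ).HasTemperateGrowth := by fun_prop
  have hfderiv (x : E) : fderiv ℝ (fun y : E ↦ ‖y‖ ^ 2) x v = ((2 : ℝ) • inner ℝ v) x := by
    simp [real_inner_comm]
  rw [normSqCLM, lineDerivOp_smulLeftCLM (by fun_prop) (by fun_prop) hfderiv,
    SchwartzMap.smulLeftCLM_smul htemp]
  rfl

theorem eulerCLM_eq_sum {ι : Type*} [Fintype ι] (b : OrthonormalBasis ι ℝ E) (f : 𝓢(E, F)) :
    eulerCLM E F f = ∑ i, positionCLM F (b i) (∂_{b i} f) := by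
  ext x
  have hx : fderiv ℝ f x x = ∑ i, ⟪b i, x⟫_ℝ • fderiv ℝ f x (b i) := by
    simp_rw [← map_smul, ← map_sum, b.sum_repr' x]
  simp [hx, SchwartzMap.lineDerivOp_apply_eq_fderiv]

end Operators

section Commutators

variable {E F : Type*} [NormedAddCommGroup E] [InnerProductSpace ℝ E] [FiniteDimensional ℝ E]
  [NormedAddCommGroup F] [NormedSpace ℝ F]

theorem lineDerivOp_eulerCLM (v : E) (f : 𝓢(E, F)) :
    ∂_{v} (eulerCLM E F f) = ∂_{v} f + eulerCLM E F (∂_{v} f) := by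
  let b := stdOrthonormalBasis ℝ E
  have hv : ∑ i, ⟪b i, v⟫_ℝ • ∂_{b i} f = ∂_{v} f := by
    ext x
    simp_rw [sum_apply, smul_apply, SchwartzMap.lineDerivOp_apply_eq_fderiv,
      ← map_smul, ← map_sum, b.sum_repr' v]
  simp_rw [eulerCLM_eq_sum b, LineDeriv.lineDerivOp_sum, lineDerivOp_positionCLM,
    Finset.sum_add_distrib, hv, lineDerivOp_comm v]

theorem laplacian_eulerCLM (f : 𝓢(E, F)) :
    Δ (eulerCLM E F f) = (2 : ℝ) • Δ f + eulerCLM E F (Δ f) := by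
  simp_rw [SchwartzMap.laplacian_eq_sum (stdOrthonormalBasis ℝ E), lineDerivOp_eulerCLM,
    LineDeriv.lineDerivOp_add, lineDerivOp_eulerCLM, Finset.sum_add_distrib, map_sum]
  module

theorem laplacian_normSqCLM (f : 𝓢(E, F)) :
    Δ (normSqCLM E F f) = (2 * Module.finrank ℝ E : ℝ) • f + (4 : ℝ) • eulerCLM E F f +
      normSqCLM E F (Δ f) := by
  let b := stdOrthonormalBasis ℝ E
  simp_rw [SchwartzMap.laplacian_eq_sum b, eulerCLM_eq_sum b, lineDerivOp_normSqCLM,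
    LineDeriv.lineDerivOp_add, LineDeriv.lineDerivOp_smul, lineDerivOp_normSqCLM,
    lineDerivOp_positionCLM, Finset.sum_add_distrib, map_sum]
  simp only [inner_self_eq_norm_sq_to_K, OrthonormalBasis.norm_eq_one, ringHom_apply, one_pow,
    one_smul, smul_add, Finset.sum_add_distrib, Finset.sum_const, Finset.card_univ,
    Fintype.card_fin, ← Finset.smul_sum]
  module

end Commutators

section L2

variable {E F : Type*} [NormedAddCommGroup E] [InnerProductSpace ℝ E] [FiniteDimensional ℝ E]
  [MeasurableSpace E] [BorelSpace E] [NormedAddCommGroup F] [InnerProductSpace ℝ F]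

theorem integrable_inner_schwartz (f g : 𝓢(E, F)) : Integrable fun x ↦ ⟪f x, g x⟫_ℝ :=
  (SchwartzMap.pairing (innerSL ℝ) f g).integrable

/-- The real `L²` inner product `∫ ⟪f, g⟫` of Schwartz functions, as a bilinear form. -/
def l2Inner : 𝓢(E, F) →ₗ[ℝ] 𝓢(E, F) →ₗ[ℝ] ℝ :=
  LinearMap.mk₂ ℝ (fun f g ↦ ∫ x, ⟪f x, g x⟫_ℝ)
    (fun f₁ f₂ g ↦ by
      simpa [inner_add_left] using
        integral_add (integrable_inner_schwartz f₁ g) (integrable_inner_schwartz f₂ g))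
    (fun c f g ↦ by simp [real_inner_smul_left, integral_const_mul])
    (fun f g₁ g₂ ↦ by
      simpa [inner_add_right] using
        integral_add (integrable_inner_schwartz f g₁) (integrable_inner_schwartz f g₂))
    (fun c f g ↦ by simp [real_inner_smul_right, integral_const_mul])

theorem l2Inner_apply (f g : 𝓢(E, F)) : l2Inner f g = ∫ x, ⟪f x, g x⟫_ℝ := rfl

theorem l2Inner_comm (f g : 𝓢(E, F)) : l2Inner f g = l2Inner g f := by
  simp_rw [l2Inner_apply, real_inner_comm]

theorem l2Inner_laplacian_right (f g : 𝓢(E, F)) : l2Inner f (Δ g) = l2Inner (Δ f) g :=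
  SchwartzMap.integral_bilinear_laplacian_right_eq_left f g (innerSL ℝ)

theorem l2Inner_lineDerivOp_right (v : E) (f g : 𝓢(E, F)) :
    l2Inner f (∂_{v} g) = -l2Inner (∂_{v} f) g :=
  SchwartzMap.integral_bilinear_lineDerivOp_right_eq_neg_left f g (innerSL ℝ) v

theorem l2Inner_positionCLM_right (v : E) (f g : 𝓢(E, F)) :
    l2Inner f (positionCLM F v g) = l2Inner (positionCLM F v f) g := by
  simp_rw [l2Inner_apply, positionCLM_apply, real_inner_smul_left, real_inner_smul_right]

theorem l2Inner_normSqCLM_right (f g : 𝓢(E, F)) :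
    l2Inner f (normSqCLM E F g) = l2Inner (normSqCLM E F f) g := by
  simp_rw [l2Inner_apply, normSqCLM_apply, real_inner_smul_left, real_inner_smul_right]

theorem l2Inner_eulerCLM_right (f g : 𝓢(E, F)) :
    l2Inner f (eulerCLM E F g) =
      -l2Inner (eulerCLM E F f) g - Module.finrank ℝ E * l2Inner f g := by
  let b := stdOrthonormalBasis ℝ E
  have hterm (i) : l2Inner f (positionCLM F (b i) (∂_{b i} g)) =
      -l2Inner f g - l2Inner (positionCLM F (b i) (∂_{b i} f)) g := by
    rw [l2Inner_positionCLM_right, l2Inner_lineDerivOp_right, lineDerivOp_positionCLM]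
    simp only [inner_self_eq_norm_sq_to_K, OrthonormalBasis.norm_eq_one, ringHom_apply, one_pow,
      one_smul, map_add, LinearMap.add_apply]
    ring
  simp_rw [eulerCLM_eq_sum b, map_sum, hterm, Finset.sum_sub_distrib, LinearMap.sum_apply,
    Finset.sum_const, Finset.card_univ, Fintype.card_fin, nsmul_eq_mul]
  ring

theorem l2Inner_eulerCLM_laplacian (f : 𝓢(E, F)) :
    2 * l2Inner (eulerCLM E F f) (Δ f) = (2 - Module.finrank ℝ E) * l2Inner f (Δ f) := by
  have h : l2Inner (eulerCLM E F f) (Δ f) = 2 * l2Inner f (Δ f) - l2Inner (eulerCLM E F f) (Δ f) -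
      Module.finrank ℝ E * l2Inner f (Δ f) :=
    calc l2Inner (eulerCLM E F f) (Δ f)
        = l2Inner f ((2 : ℝ) • Δ f + eulerCLM E F (Δ f)) := by
          rw [l2Inner_laplacian_right, laplacian_eulerCLM, l2Inner_comm]
      _ = _ := by
          rw [map_add, map_smul, l2Inner_eulerCLM_right, smul_eq_mul]
          ring
  linarith

theorem sum_integral_norm_sq_lineDerivOp {ι : Type*} [Fintype ι] (b : OrthonormalBasis ι ℝ E)
    (f : 𝓢(E, F)) : ∑ i, ∫ x, ‖∂_{b i} f x‖ ^ 2 = -l2Inner f (Δ f) := by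
  have hterm (i : ι) : ∫ x, ‖∂_{b i} f x‖ ^ 2 = -l2Inner f (∂_{b i} (∂_{b i} f)) := by
    rw [l2Inner_lineDerivOp_right, neg_neg, l2Inner_apply]
    simp_rw [real_inner_self_eq_norm_sq]
  simp_rw [hterm, SchwartzMap.laplacian_eq_sum b, map_sum, Finset.sum_neg_distrib]

theorem integral_norm_sq_mul_add (f g : 𝓢(E, F)) :
    ∫ x, ‖x‖ ^ 2 * (‖f x‖ ^ 2 + ‖g x‖ ^ 2) =
      l2Inner f (normSqCLM E F f) + l2Inner g (normSqCLM E F g) := by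
  rw [l2Inner_apply, l2Inner_apply,
    ← integral_add (integrable_inner_schwartz _ _) (integrable_inner_schwartz _ _)]
  simp_rw [normSqCLM_apply, real_inner_smul_right, real_inner_self_eq_norm_sq, mul_add]

end L2

section Complex

variable {E : Type*} [NormedAddCommGroup E]

theorem eulerCLM_I_smul [NormedSpace ℝ E] (f : 𝓢(E, ℂ)) :
    eulerCLM E ℂ (Complex.I • f) = Complex.I • eulerCLM E ℂ f :=
  SchwartzMap.ext fun x ↦
    DFunLike.congr_fun (fderiv_const_smul f.differentiableAt Complex.I) x

variable [InnerProductSpace ℝ E]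

theorem normSqCLM_I_smul (f : 𝓢(E, ℂ)) :
    normSqCLM E ℂ (Complex.I • f) = Complex.I • normSqCLM E ℂ f :=
  SchwartzMap.ext fun x ↦ by
    simp only [normSqCLM_apply, smul_apply, smul_eq_mul, Complex.real_smul]
    ring

variable [FiniteDimensional ℝ E]

theorem laplacian_I_smul (f : 𝓢(E, ℂ)) : Δ (Complex.I • f) = Complex.I • Δ f := by
  simp_rw [SchwartzMap.laplacian_eq_sum (stdOrthonormalBasis ℝ E), LineDeriv.lineDerivOp_smul,
    Finset.smul_sum]

variable [MeasurableSpace E] [BorelSpace E]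

theorem l2Inner_I_smul_left (f g : 𝓢(E, ℂ)) :
    l2Inner (Complex.I • f) g = -l2Inner f (Complex.I • g) := by
  simp_rw [l2Inner_apply, ← integral_neg]
  congr with x
  simp only [smul_apply, smul_eq_mul, Complex.inner, map_mul, Complex.conj_I, ← Complex.neg_re]
  ring_nf

theorem l2Inner_I_smul_I_smul (f g : 𝓢(E, ℂ)) :
    l2Inner (Complex.I • f) (Complex.I • g) = l2Inner f g := by
  simp [l2Inner_I_smul_left, smul_smul]

theorem l2Inner_I_smul_self (f : 𝓢(E, ℂ)) : l2Inner (Complex.I • f) f = 0 := by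
  linarith [l2Inner_I_smul_left f f, l2Inner_comm (Complex.I • f) f]

theorem l2Inner_I_smul_laplacian_normSqCLM (f : 𝓢(E, ℂ)) :
    l2Inner (Complex.I • Δ f) (normSqCLM E ℂ f) =
      2 * l2Inner (Complex.I • f) (eulerCLM E ℂ f) := by
  have h : l2Inner (Complex.I • Δ f) (normSqCLM E ℂ f) =
      4 * l2Inner (Complex.I • f) (eulerCLM E ℂ f) - l2Inner (Complex.I • Δ f) (normSqCLM E ℂ f) :=
    calc l2Inner (Complex.I • Δ f) (normSqCLM E ℂ f)
        = l2Inner (Complex.I • f) (Δ (normSqCLM E ℂ f)) := by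
          rw [l2Inner_laplacian_right, laplacian_I_smul]
      _ = 4 * l2Inner (Complex.I • f) (eulerCLM E ℂ f) +
            l2Inner (normSqCLM E ℂ (Complex.I • f)) (Δ f) := by
          simp only [laplacian_normSqCLM, map_add, LinearMap.map_smul, l2Inner_I_smul_self,
            l2Inner_normSqCLM_right, mul_zero, zero_add, smul_eq_mul]
      _ = _ := by
          rw [normSqCLM_I_smul, l2Inner_I_smul_left (normSqCLM E ℂ f),
            l2Inner_comm (normSqCLM E ℂ f), sub_eq_add_neg]
  linarith

end Complex

section Derivative

variable {E F : Type*} [NormedAddCommGroup E] [NormedAddCommGroup F]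

theorem isVonNBounded_of_forall_iteratedFDeriv_le [NormedSpace ℝ E] [NormedSpace ℝ F]
    {A : Set 𝓢(E, F)}
    (hA : ∀ k n : ℕ, ∃ C, ∀ f ∈ A, ∀ x, ‖x‖ ^ k * ‖iteratedFDeriv ℝ n f x‖ ≤ C) :
    Bornology.IsVonNBounded ℝ A := by
  refine (schwartz_withSeminorms ℝ E F).isVonNBounded_iff_seminorm_bounded.2 fun ⟨k, n⟩ ↦ ?_
  obtain ⟨C, hC⟩ := hA k n
  refine ⟨max C 0 + 1, by positivity, fun f hf ↦ ?_⟩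
  exact (SchwartzMap.seminorm_le_bound ℝ k n f (le_max_right C 0)
    fun x ↦ (hC f hf x).trans (le_max_left C 0)).trans_lt (lt_add_one _)

theorem exists_decay_of_isVonNBounded [NormedSpace ℝ E] [NormedSpace ℝ F] {A : Set 𝓢(E, F)}
    (hA : Bornology.IsVonNBounded ℝ A) (k : ℕ) :
    ∃ C, ∀ f ∈ A, ∀ x, (1 + ‖x‖) ^ k * ‖f x‖ ≤ C := by
  obtain ⟨r, -, hr⟩ :=
    (schwartz_withSeminorms ℝ E F).isVonNBounded_iff_finset_seminorm_bounded.1 hA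
      (Finset.Iic (k, 0))
  refine ⟨2 ^ k * r, fun f hf x ↦ ?_⟩
  have hle := SchwartzMap.one_add_le_sup_seminorm_apply (𝕜 := ℝ) (m := (k, 0)) le_rfl le_rfl f x
  rw [norm_iteratedFDeriv_zero] at hle
  exact hle.trans (by gcongr; exact (hr f hf).le)

theorem exists_norm_le_of_isVonNBounded [NormedSpace ℝ E] [NormedSpace ℝ F] {A : Set 𝓢(E, F)}
    (hA : Bornology.IsVonNBounded ℝ A) : ∃ C, ∀ f ∈ A, ∀ x, ‖f x‖ ≤ C := by
  simpa only [pow_zero, one_mul] using exists_decay_of_isVonNBounded hA 0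

/-- The curve `w` of Schwartz functions is bounded in Schwartz space near `t`, and `w'` is its
derivative at `t`, pointwise and with uniformly bounded difference quotients.  This is weaker than
differentiability in the Schwartz topology, but suffices to differentiate quadratic functionals. -/
structure HasSchwartzDerivAt [NormedSpace ℝ E] [NormedSpace ℝ F] (w : ℝ → 𝓢(E, F)) (w' : 𝓢(E, F))
    (t : ℝ) : Prop where
  exists_isVonNBounded : ∃ U ∈ 𝓝 t, Bornology.IsVonNBounded ℝ (w '' U)
  exists_lipschitz : ∃ C, ∀ᶠ s in 𝓝 t, ∀ x, ‖w s x - w t x‖ ≤ C * |s - t|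
  hasDerivAt : ∀ x, HasDerivAt (w · x) (w' x) t
  continuousAt_fderiv : ∀ x, ContinuousAt (fun s ↦ fderiv ℝ (w s) x) t

theorem HasSchwartzDerivAt.of_hasDerivAt [NormedSpace ℝ E] [NormedSpace ℝ F]
    {w w' : ℝ → 𝓢(E, F)} {t C : ℝ} {S : Set ℝ}
    (hS : S ∈ 𝓝 t) (hbdd : Bornology.IsVonNBounded ℝ (w '' S))
    (hsmooth : ∀ x, ContDiffAt ℝ 1 (fun p : ℝ × E ↦ w p.1 p.2) (t, x))
    (hderiv : ∀ s ∈ S, ∀ x, HasDerivAt (w · x) (w' s x) s) (hC : ∀ s ∈ S, ∀ x, ‖w' s x‖ ≤ C) :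
    HasSchwartzDerivAt w (w' t) t where
  exists_isVonNBounded := ⟨S, hS, hbdd⟩
  exists_lipschitz := by
    obtain ⟨ε, hε, hball⟩ := Metric.mem_nhds_iff.1 hS
    refine ⟨C, ?_⟩
    filter_upwards [Metric.ball_mem_nhds t hε] with s hs x
    exact (convex_ball t ε).norm_image_sub_le_of_norm_hasDerivWithin_le
      (fun r hr ↦ (hderiv r (hball hr) x).hasDerivWithinAt) (fun r hr ↦ hC r (hball hr) x)
      (Metric.mem_ball_self hε) hs
  hasDerivAt := hderiv t (mem_of_mem_nhds hS)
  continuousAt_fderiv x :=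
    (ContDiffAt.fderiv (m := 0) (f := fun s ↦ ⇑(w s)) (hsmooth x) contDiffAt_const
      (by simp)).continuousAt

variable [InnerProductSpace ℝ E] [FiniteDimensional ℝ E] [MeasurableSpace E] [BorelSpace E]
  [InnerProductSpace ℝ F]

theorem tendsto_l2Inner {α : Type*} {l : Filter α} [l.IsCountablyGenerated] {f g : α → 𝓢(E, F)}
    {f₀ g₀ : 𝓢(E, F)} {C : ℝ} {A : Set 𝓢(E, F)} (hA : Bornology.IsVonNBounded ℝ A)
    (hfC : ∀ᶠ a in l, ∀ x, ‖f a x‖ ≤ C) (hgA : ∀ᶠ a in l, g a ∈ A)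
    (hf : ∀ x, Tendsto (f · x) l (𝓝 (f₀ x))) (hg : ∀ x, Tendsto (g · x) l (𝓝 (g₀ x))) :
    Tendsto (fun a ↦ l2Inner (f a) (g a)) l (𝓝 (l2Inner f₀ g₀)) := by
  obtain ⟨D, hD⟩ := exists_decay_of_isVonNBounded hA (volume : Measure E).integrablePower
  refine tendsto_integral_filter_of_dominated_convergence
    (fun x ↦ C * D * (1 + ‖x‖) ^ (-((volume : Measure E).integrablePower : ℝ)))
    (.of_forall fun a ↦ (integrable_inner_schwartz (f a) (g a)).aestronglyMeasurable) ?_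
    (volume.integrable_pow_neg_integrablePower.const_mul _)
    (.of_forall fun x ↦ (hf x).inner (hg x))
  filter_upwards [hfC, hgA] with a hfa hga
  refine .of_forall fun x ↦ (norm_inner_le_norm _ _).trans ?_
  have hgx : ‖g a x‖ ≤ D * (1 + ‖x‖) ^ (-((volume : Measure E).integrablePower : ℝ)) := by
    rw [rpow_neg (by positivity), rpow_natCast, ← div_eq_mul_inv, le_div_iff₀' (by positivity)]
    exact hD _ hga x
  rw [mul_assoc]
  exact mul_le_mul (hfa x) hgx (norm_nonneg _) ((norm_nonneg _).trans (hfa x))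

theorem HasSchwartzDerivAt.l2Inner_symmetric {T : 𝓢(E, F) →L[ℝ] 𝓢(E, F)}
    {w : ℝ → 𝓢(E, F)} {w' : 𝓢(E, F)} {t : ℝ} (hw : HasSchwartzDerivAt w w' t)
    (hT : ∀ f g, l2Inner f (T g) = l2Inner (T f) g)
    (hcont : ∀ x, ContinuousAt (fun s ↦ T (w s) x) t) :
    HasDerivAt (fun s ↦ l2Inner (w s) (T (w s))) (2 * l2Inner w' (T (w t))) t := by
  obtain ⟨U, hU, hUbdd⟩ := hw.exists_isVonNBounded
  obtain ⟨C, hC⟩ := hw.exists_lipschitz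
  have hslope (s : ℝ) : slope (fun s ↦ l2Inner (w s) (T (w s))) t s =
      l2Inner (slope w t s) (T (w s) + T (w t)) := by
    have : l2Inner (w s) (T (w t)) = l2Inner (w t) (T (w s)) := by rw [hT, l2Inner_comm]
    simp only [slope, vsub_eq_sub, map_smul, map_sub, LinearMap.smul_apply, LinearMap.sub_apply,
      map_add, this]
    ring
  have hquot : ∀ᶠ s in 𝓝[≠] t, ∀ x, ‖slope w t s x‖ ≤ C := by
    filter_upwards [nhdsWithin_le_nhds hC, self_mem_nhdsWithin] with s hs hst x
    have hpos : 0 < |s - t| := abs_pos.2 (sub_ne_zero.2 hst)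
    rw [slope, vsub_eq_sub, smul_apply, sub_apply, norm_smul, norm_inv, norm_eq_abs,
      inv_mul_le_iff₀' hpos]
    exact hs x
  have hTw : Tendsto (fun s ↦ l2Inner (slope w t s) (T (w s) + T (w t))) (𝓝[≠] t)
      (𝓝 (l2Inner w' (T (w t) + T (w t)))) := by
    have hbdd := hUbdd.image T
    refine tendsto_l2Inner (hbdd.add hbdd) hquot ?_
      (fun x ↦ hasDerivAt_iff_tendsto_slope.1 (hw.hasDerivAt x))
      (fun x ↦ ((hcont x).tendsto.mono_left nhdsWithin_le_nhds).add_const _)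
    filter_upwards [nhdsWithin_le_nhds hU] with s hs
    exact Set.add_mem_add ⟨_, ⟨s, hs, rfl⟩, rfl⟩ ⟨_, ⟨t, mem_of_mem_nhds hU, rfl⟩, rfl⟩
  rw [hasDerivAt_iff_tendsto_slope, two_mul, ← map_add]
  exact hTw.congr fun s ↦ (hslope s).symm

end Derivative

section Schrodinger

variable {E : Type*} [NormedAddCommGroup E]

variable (E) in
/-- The symmetric generator `-i (x · ∇ + n / 2)` of dilations of complex-valued Schwartz functions
on an `n`-dimensional space. -/
def dilationCLM [NormedSpace ℝ E] : 𝓢(E, ℂ) →L[ℝ] 𝓢(E, ℂ) :=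
  -(Complex.I • (eulerCLM E ℂ + (Module.finrank ℝ E / 2 : ℝ) • .id ℝ _))

theorem dilationCLM_apply [NormedSpace ℝ E] (f : 𝓢(E, ℂ)) :
    dilationCLM E f = -(Complex.I • (eulerCLM E ℂ f + (Module.finrank ℝ E / 2 : ℝ) • f)) :=
  rfl

variable [InnerProductSpace ℝ E] [FiniteDimensional ℝ E]

theorem exists_norm_I_smul_laplacian_add_le {w N : ℝ → 𝓢(E, ℂ)} {S : Set ℝ} {B : ℝ}
    (hw : Bornology.IsVonNBounded ℝ (w '' S)) (hN : ∀ s ∈ S, ∀ x, ‖N s x‖ ≤ B) (c : ℝ) :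
    ∃ C, ∀ s ∈ S, ∀ x, ‖(Complex.I • (c • Δ (w s) + N s)) x‖ ≤ C := by
  obtain ⟨D, hD⟩ := exists_norm_le_of_isVonNBounded
    (hw.image (c • LineDeriv.laplacianCLM ℝ E 𝓢(E, ℂ)))
  refine ⟨D + B, fun s hs x ↦ ?_⟩
  rw [smul_apply, norm_smul, Complex.norm_I, one_mul]
  exact norm_add_le_of_le (hD _ ⟨_, ⟨s, hs, rfl⟩, rfl⟩ x) (hN s hs x)

variable [MeasurableSpace E] [BorelSpace E]

theorem l2Inner_dilationCLM_right (f g : 𝓢(E, ℂ)) :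
    l2Inner f (dilationCLM E g) =
      l2Inner (Complex.I • f) (eulerCLM E ℂ g) +
        Module.finrank ℝ E / 2 * l2Inner (Complex.I • f) g := by
  rw [dilationCLM_apply, map_neg, ← l2Inner_I_smul_left, map_add, LinearMap.map_smul, smul_eq_mul]

theorem l2Inner_dilationCLM_symm (f g : 𝓢(E, ℂ)) :
    l2Inner f (dilationCLM E g) = l2Inner (dilationCLM E f) g := by
  have hI : l2Inner (Complex.I • f) g = -l2Inner (Complex.I • g) f := by
    rw [l2Inner_I_smul_left, l2Inner_comm]
  rw [l2Inner_comm _ g, l2Inner_dilationCLM_right, l2Inner_dilationCLM_right,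
    l2Inner_eulerCLM_right, eulerCLM_I_smul, l2Inner_I_smul_left (eulerCLM E ℂ f), hI,
    l2Inner_comm (eulerCLM E ℂ f)]
  ring

theorem l2Inner_dilationCLM_self (f : 𝓢(E, ℂ)) :
    l2Inner f (dilationCLM E f) = l2Inner (Complex.I • f) (eulerCLM E ℂ f) := by
  rw [l2Inner_dilationCLM_right, l2Inner_I_smul_self, mul_zero, add_zero]

variable {w : ℝ → 𝓢(E, ℂ)} {N : 𝓢(E, ℂ)} {c t : ℝ}

theorem HasSchwartzDerivAt.variance (hw : HasSchwartzDerivAt w (Complex.I • (c • Δ (w t) + N)) t) :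
    HasDerivAt (fun s ↦ l2Inner (w s) (normSqCLM E ℂ (w s)))
      (4 * c * l2Inner (w t) (dilationCLM E (w t)) +
        2 * l2Inner (Complex.I • N) (normSqCLM E ℂ (w t))) t := by
  have hvirial : l2Inner (Complex.I • (c • Δ (w t) + N)) (normSqCLM E ℂ (w t)) =
      2 * c * l2Inner (w t) (dilationCLM E (w t)) +
        l2Inner (Complex.I • N) (normSqCLM E ℂ (w t)) := by
    rw [smul_add, smul_comm, map_add, map_smul, LinearMap.add_apply, LinearMap.smul_apply,
      l2Inner_I_smul_laplacian_normSqCLM, l2Inner_dilationCLM_self, smul_eq_mul]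
    ring
  convert hw.l2Inner_symmetric l2Inner_normSqCLM_right (fun x ↦ ?_) using 1
  · rw [hvirial]
    ring
  · simpa only [normSqCLM_apply] using (hw.hasDerivAt x).continuousAt.fun_const_smul (‖x‖ ^ 2)

theorem HasSchwartzDerivAt.dilation (hw : HasSchwartzDerivAt w (Complex.I • (c • Δ (w t) + N)) t) :
    HasDerivAt (fun s ↦ l2Inner (w s) (dilationCLM E (w s)))
      (-2 * c * l2Inner (w t) (Δ (w t)) - 2 * l2Inner N (eulerCLM E ℂ (w t)) -
        Module.finrank ℝ E * l2Inner N (w t)) t := by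
  have hpohozaev : l2Inner (Complex.I • (c • Δ (w t) + N)) (dilationCLM E (w t)) =
      -c * l2Inner (w t) (Δ (w t)) - l2Inner N (eulerCLM E ℂ (w t)) -
        Module.finrank ℝ E / 2 * l2Inner N (w t) := by
    have hΔ := l2Inner_eulerCLM_laplacian (w t)
    rw [l2Inner_comm (eulerCLM E ℂ (w t))] at hΔ
    rw [dilationCLM_apply, map_neg, l2Inner_I_smul_I_smul]
    simp only [map_add, map_smul, LinearMap.add_apply, LinearMap.smul_apply, smul_eq_mul,
      l2Inner_comm (Δ (w t)) (w t)]
    linear_combination (-c / 2) * hΔ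
  convert hw.l2Inner_symmetric l2Inner_dilationCLM_symm (fun x ↦ ?_) using 1
  · rw [hpohozaev]
    ring
  · have hcont : ContinuousAt
        (fun s ↦ -(Complex.I • (fderiv ℝ (w s) x x + (Module.finrank ℝ E / 2 : ℝ) • w s x))) t :=
      ((((hw.continuousAt_fderiv x).clm_apply continuousAt_const).add
        ((hw.hasDerivAt x).continuousAt.fun_const_smul _)).fun_const_smul _).neg
    simpa only [dilationCLM_apply, neg_apply, smul_apply, add_apply, eulerCLM_apply] using hcont

end Schrodinger

section Nonlinearity

variable {E : Type*} [NormedAddCommGroup E]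

section

variable [NormedSpace ℝ E]

/-- The pointwise product of complex-valued Schwartz functions. -/
def schwartzMul : 𝓢(E, ℂ) →ₗ[ℝ] 𝓢(E, ℂ) →L[ℝ] 𝓢(E, ℂ) :=
  SchwartzMap.pairing (ContinuousLinearMap.mul ℝ ℂ)

/-- The pointwise complex conjugate of a Schwartz function. -/
def schwartzConj : 𝓢(E, ℂ) →L[ℝ] 𝓢(E, ℂ) :=
  SchwartzMap.postcompCLM (Complex.conjCLE : ℂ →L[ℝ] ℂ)

@[simp]
theorem schwartzMul_apply (f g : 𝓢(E, ℂ)) (x : E) : schwartzMul f g x = f x * g x := rfl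

@[simp]
theorem schwartzConj_apply (f : 𝓢(E, ℂ)) (x : E) : schwartzConj f x = starRingEnd ℂ (f x) := rfl

theorem eulerCLM_schwartzMul (f g : 𝓢(E, ℂ)) :
    eulerCLM E ℂ (schwartzMul f g) =
      schwartzMul f (eulerCLM E ℂ g) + schwartzMul g (eulerCLM E ℂ f) :=
  SchwartzMap.ext fun x ↦
    DFunLike.congr_fun (fderiv_fun_mul f.differentiableAt g.differentiableAt) x

end

variable [InnerProductSpace ℝ E] [FiniteDimensional ℝ E] [MeasurableSpace E] [BorelSpace E]

theorem l2Inner_schwartzMul_conj (f g h : 𝓢(E, ℂ)) :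
    l2Inner (schwartzMul f (schwartzConj g)) h = l2Inner f (schwartzMul g h) := by
  simp_rw [l2Inner_apply]
  congr with x
  simp only [schwartzMul_apply, schwartzConj_apply, Complex.inner, map_mul, Complex.conj_conj]
  ring_nf

theorem l2Inner_I_smul_mul_conj_add_I_smul_mul_self (u v : 𝓢(E, ℂ)) :
    l2Inner (Complex.I • schwartzMul v (schwartzConj u)) (normSqCLM E ℂ u) +
      l2Inner (Complex.I • schwartzMul u u) (normSqCLM E ℂ v) = 0 := by
  have hmul : schwartzMul u (Complex.I • normSqCLM E ℂ u) =
      normSqCLM E ℂ (Complex.I • schwartzMul u u) := by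
    ext x
    simp only [schwartzMul_apply, smul_apply, normSqCLM_apply, Complex.real_smul, smul_eq_mul]
    ring
  rw [l2Inner_I_smul_left, l2Inner_schwartzMul_conj, hmul, l2Inner_comm v,
    l2Inner_normSqCLM_right, neg_add_cancel]

theorem two_mul_l2Inner_schwartzMul_conj_eulerCLM (u v : 𝓢(E, ℂ)) :
    2 * l2Inner (schwartzMul v (schwartzConj u)) (eulerCLM E ℂ u) =
      -l2Inner (schwartzMul u u) (eulerCLM E ℂ v) -
        Module.finrank ℝ E * l2Inner (schwartzMul u u) v := by
  rw [l2Inner_schwartzMul_conj, ← l2Inner_comm v, ← l2Inner_comm (eulerCLM E ℂ v),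
    ← l2Inner_eulerCLM_right, eulerCLM_schwartzMul, map_add, two_mul]

variable {U W : ℝ → 𝓢(E, ℂ)} {a b t : ℝ}

theorem hasDerivAt_variance_system
    (hU : HasSchwartzDerivAt U
      (Complex.I • (a • Δ (U t) + schwartzMul (W t) (schwartzConj (U t)))) t)
    (hW : HasSchwartzDerivAt W (Complex.I • (b • Δ (W t) + schwartzMul (U t) (U t))) t) :
    HasDerivAt (fun s ↦ l2Inner (U s) (normSqCLM E ℂ (U s)) + l2Inner (W s) (normSqCLM E ℂ (W s)))
      (4 * (a * l2Inner (U t) (dilationCLM E (U t)) + b * l2Inner (W t) (dilationCLM E (W t))))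
      t := by
  refine (hU.variance.fun_add hW.variance).congr_deriv ?_
  linear_combination 2 * l2Inner_I_smul_mul_conj_add_I_smul_mul_self (U t) (W t)

theorem hasDerivAt_dilation_system
    (hU : HasSchwartzDerivAt U
      (Complex.I • (a • Δ (U t) + schwartzMul (W t) (schwartzConj (U t)))) t)
    (hW : HasSchwartzDerivAt W (Complex.I • (b • Δ (W t) + schwartzMul (U t) (U t))) t) :
    HasDerivAt
      (fun s ↦ a * l2Inner (U s) (dilationCLM E (U s)) + b * l2Inner (W s) (dilationCLM E (W s)))
      (-2 * a ^ 2 * l2Inner (U t) (Δ (U t)) - 2 * b ^ 2 * l2Inner (W t) (Δ (W t)) -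
        Module.finrank ℝ E * b * l2Inner (schwartzMul (U t) (U t)) (W t) +
          (a - 2 * b) * l2Inner (schwartzMul (U t) (U t)) (eulerCLM E ℂ (W t))) t := by
  refine ((hU.dilation.const_mul a).fun_add (hW.dilation.const_mul b)).congr_deriv ?_
  rw [l2Inner_schwartzMul_conj (W t) (U t) (U t), l2Inner_comm (W t) (schwartzMul (U t) (U t))]
  linear_combination (-a) * two_mul_l2Inner_schwartzMul_conj_eulerCLM (U t) (W t)

end Nonlinearity

theorem IsSchwartz.exists_schwartzMap {f : E6 → ℂ} (hf : IsSchwartz f) :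
    ∃ g : 𝓢(E6, ℂ), ⇑g = f :=
  ⟨⟨f, hf.1, hf.2⟩, rfl⟩

theorem lap_eq_laplacian (f : 𝓢(E6, ℂ)) (x : E6) : lap f x = Δ f x := by
  rw [SchwartzMap.laplacian_eq_sum (EuclideanSpace.basisFun (Fin 6) ℝ), sum_apply]
  simp_rw [EuclideanSpace.basisFun_apply]
  rfl

theorem integral_gradNormSq (f : 𝓢(E6, ℂ)) : ∫ x, gradNormSq f x = -l2Inner f (Δ f) := by
  rw [← sum_integral_norm_sq_lineDerivOp (EuclideanSpace.basisFun (Fin 6) ℝ),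
    ← integral_finsetSum]
  · simp_rw [EuclideanSpace.basisFun_apply]
    rfl
  · intro i _
    simp_rw [← real_inner_self_eq_norm_sq]
    exact integrable_inner_schwartz _ _

theorem Ren_eq_l2Inner (f g : 𝓢(E6, ℂ)) : Ren f g = l2Inner (schwartzMul f f) g := by
  have hint : Integrable fun x ↦ starRingEnd ℂ (g x) * (f x * f x) :=
    (schwartzMul (schwartzConj g) (schwartzMul f f)).integrable
  simp_rw [Ren, pow_two]
  rw [l2Inner_comm, l2Inner_apply, ← RCLike.re_eq_complex_re, ← integral_re hint]
  simp [Complex.inner, mul_comm]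

namespace IsClassicalSol

variable {κ : ℝ} {I : Set ℝ} {t : ℝ}

theorem congr {u v u' v' : ℝ → E6 → ℂ} (h : IsClassicalSol κ I u v) (hI : IsOpen I)
    (hu : ∀ t ∈ I, u' t = u t) (hv : ∀ t ∈ I, v' t = v t) : IsClassicalSol κ I u' v' where
  smooth := h.smooth.congr fun p hp ↦ by rw [hu p.1 hp.1, hv p.1 hp.1]
  eqn_u t ht x := by
    have hloc : (u' · x) =ᶠ[𝓝 t] (u · x) :=
      (hI.eventually_mem ht).mono fun s hs ↦ congrFun (hu s hs) x
    rw [hloc.deriv_eq, hu t ht, hv t ht, h.eqn_u t ht]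
  eqn_v t ht x := by
    have hloc : (v' · x) =ᶠ[𝓝 t] (v · x) :=
      (hI.eventually_mem ht).mono fun s hs ↦ congrFun (hv s hs) x
    rw [hloc.deriv_eq, hu t ht, hv t ht, h.eqn_v t ht]
  schwartz_u t ht := hu t ht ▸ h.schwartz_u t ht
  schwartz_v t ht := hv t ht ▸ h.schwartz_v t ht
  bounds K hK hKc k n := by
    obtain ⟨C, hC⟩ := h.bounds K hK hKc k n
    exact ⟨C, fun t ht ↦ by rw [hu t (hK ht), hv t (hK ht)]; exact hC t ht⟩

theorem exists_schwartzMap {u v : ℝ → E6 → ℂ} (h : IsClassicalSol κ I u v) (hI : IsOpen I) :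
    ∃ U W : ℝ → 𝓢(E6, ℂ), (∀ t ∈ I, ⇑(U t) = u t) ∧ (∀ t ∈ I, ⇑(W t) = v t) ∧
      IsClassicalSol κ I (fun t ↦ U t) (fun t ↦ W t) := by
  choose! U hU using fun t ht ↦ (h.schwartz_u t ht).exists_schwartzMap
  choose! W hW using fun t ht ↦ (h.schwartz_v t ht).exists_schwartzMap
  exact ⟨U, W, hU, hW, h.congr hI hU hW⟩

variable {U W : ℝ → 𝓢(E6, ℂ)}

theorem contDiffAt (h : IsClassicalSol κ I (fun t ↦ U t) (fun t ↦ W t)) (hI : IsOpen I)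
    (ht : t ∈ I) (x : E6) :
    ContDiffAt ℝ ∞ (fun p : ℝ × E6 ↦ (U p.1 p.2, W p.1 p.2)) (t, x) :=
  h.smooth.contDiffAt ((hI.prod isOpen_univ).mem_nhds ⟨ht, Set.mem_univ x⟩)

theorem hasDerivAt_fst (h : IsClassicalSol κ I (fun t ↦ U t) (fun t ↦ W t)) (hI : IsOpen I)
    (ht : t ∈ I) (x : E6) :
    HasDerivAt (U · x)
      ((Complex.I • ((1 : ℝ) • Δ (U t) + schwartzMul (W t) (schwartzConj (U t)))) x) t := by
  have hdiff : DifferentiableAt ℝ (U · x) t :=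
    ((h.contDiffAt hI ht x).fst.comp t (contDiffAt_id.prodMk contDiffAt_const)).differentiableAt
      (by simp)
  refine hdiff.hasDerivAt.congr_deriv ?_
  have heq := h.eqn_u t ht x
  rw [lap_eq_laplacian] at heq
  simp only [one_smul, smul_add, add_apply, smul_apply, smul_eq_mul, schwartzMul_apply,
    schwartzConj_apply]
  linear_combination (-Complex.I) * heq + deriv (U · x) t * Complex.I_sq

theorem hasDerivAt_snd (h : IsClassicalSol κ I (fun t ↦ U t) (fun t ↦ W t)) (hI : IsOpen I)
    (ht : t ∈ I) (x : E6) :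
    HasDerivAt (W · x) ((Complex.I • (κ • Δ (W t) + schwartzMul (U t) (U t))) x) t := by
  have hdiff : DifferentiableAt ℝ (W · x) t :=
    ((h.contDiffAt hI ht x).snd.comp t (contDiffAt_id.prodMk contDiffAt_const)).differentiableAt
      (by simp)
  refine hdiff.hasDerivAt.congr_deriv ?_
  have heq := h.eqn_v t ht x
  rw [lap_eq_laplacian] at heq
  simp only [smul_add, add_apply, smul_apply, Complex.real_smul, smul_eq_mul, schwartzMul_apply]
  linear_combination (-Complex.I) * heq + deriv (W · x) t * Complex.I_sq

theorem exists_isVonNBounded (h : IsClassicalSol κ I (fun t ↦ U t) (fun t ↦ W t)) (hI : IsOpen I)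
    (ht : t ∈ I) : ∃ S ∈ 𝓝 t, S ⊆ I ∧ Bornology.IsVonNBounded ℝ (U '' S) ∧
      Bornology.IsVonNBounded ℝ (W '' S) := by
  obtain ⟨S, hS, hSI, hScomp⟩ := local_compact_nhds (hI.mem_nhds ht)
  refine ⟨S, hS, hSI, ?_, ?_⟩
  all_goals
    refine isVonNBounded_of_forall_iteratedFDeriv_le fun k n ↦ ?_
    obtain ⟨C, hC⟩ := h.bounds S hSI hScomp k n
  · exact ⟨C, Set.forall_mem_image.2 fun s hs x ↦ (hC s hs x).1⟩
  · exact ⟨C, Set.forall_mem_image.2 fun s hs x ↦ (hC s hs x).2⟩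

theorem hasSchwartzDerivAt (h : IsClassicalSol κ I (fun t ↦ U t) (fun t ↦ W t)) (hI : IsOpen I)
    (ht : t ∈ I) :
    HasSchwartzDerivAt U
        (Complex.I • ((1 : ℝ) • Δ (U t) + schwartzMul (W t) (schwartzConj (U t)))) t ∧
      HasSchwartzDerivAt W (Complex.I • (κ • Δ (W t) + schwartzMul (U t) (U t))) t := by
  obtain ⟨S, hS, hSI, hUbdd, hWbdd⟩ := h.exists_isVonNBounded hI ht
  obtain ⟨A, hA⟩ := exists_norm_le_of_isVonNBounded hUbdd
  obtain ⟨B, hB⟩ := exists_norm_le_of_isVonNBounded hWbdd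
  rw [Set.forall_mem_image] at hA hB
  obtain ⟨C, hC⟩ := exists_norm_I_smul_laplacian_add_le
    (N := fun s ↦ schwartzMul (W s) (schwartzConj (U s))) hUbdd
    (fun s hs x ↦ norm_mul_le_of_le (hB hs x) ((RCLike.norm_conj _).trans_le (hA hs x))) 1
  obtain ⟨D, hD⟩ := exists_norm_I_smul_laplacian_add_le (N := fun s ↦ schwartzMul (U s) (U s))
    hWbdd (fun s hs x ↦ norm_mul_le_of_le (hA hs x) (hA hs x)) κ
  have hsmooth (x : E6) := (h.contDiffAt hI ht x).of_le (m := 1) (by simp)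
  exact ⟨.of_hasDerivAt hS hUbdd (fun x ↦ (hsmooth x).fst)
      (fun s hs ↦ h.hasDerivAt_fst hI (hSI hs)) hC,
    .of_hasDerivAt hS hWbdd (fun x ↦ (hsmooth x).snd)
      (fun s hs ↦ h.hasDerivAt_snd hI (hSI hs)) hD⟩

end IsClassicalSol

theorem variance_second_derivative_general {κ : ℝ} {I : Set ℝ} (hI : IsOpen I) {u v : ℝ → E6 → ℂ}
    (hsol : IsClassicalSol κ I u v) {V : ℝ → ℝ}
    (hV : ∀ t ∈ I, V t = ∫ x : E6, ‖x‖ ^ 2 * (‖u t x‖ ^ 2 + ‖v t x‖ ^ 2)) {t : ℝ} (ht : t ∈ I) :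
    DifferentiableAt ℝ V t ∧ DifferentiableAt ℝ (deriv V) t ∧
      deriv (deriv V) t =
        4 * (2 * (∫ x, gradNormSq (u t) x) + 2 * κ ^ 2 * (∫ x, gradNormSq (v t) x) -
          6 * κ * Ren (u t) (v t) +
            (1 - 2 * κ) * ∫ x, ⟪u t x ^ 2, fderiv ℝ (v t) x x⟫_ℝ) := by
  obtain ⟨U, W, hU, hW, h⟩ := hsol.exists_schwartzMap hI
  have hVderiv {s : ℝ} (hs : s ∈ I) : HasDerivAt V (4 * (1 * l2Inner (U s) (dilationCLM E6 (U s)) +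
      κ * l2Inner (W s) (dilationCLM E6 (W s)))) s := by
    refine (hasDerivAt_variance_system (h.hasSchwartzDerivAt hI hs).1
      (h.hasSchwartzDerivAt hI hs).2).congr_of_eventuallyEq ?_
    filter_upwards [hI.mem_nhds hs] with r hr
    rw [hV r hr, ← hU r hr, ← hW r hr, integral_norm_sq_mul_add]
  have hV' : HasDerivAt (deriv V) _ t :=
    ((hasDerivAt_dilation_system (h.hasSchwartzDerivAt hI ht).1
      (h.hasSchwartzDerivAt hI ht).2).const_mul 4).congr_of_eventuallyEq
        ((hI.eventually_mem ht).mono fun s hs ↦ (hVderiv hs).deriv)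
  refine ⟨(hVderiv ht).differentiableAt, hV'.differentiableAt, ?_⟩
  have hcross : ∫ x, ⟪U t x ^ 2, fderiv ℝ (W t) x x⟫_ℝ =
      l2Inner (schwartzMul (U t) (U t)) (eulerCLM E6 ℂ (W t)) := by
    simp_rw [l2Inner_apply, schwartzMul_apply, pow_two, eulerCLM_apply]
  rw [hV'.deriv, ← hU t ht, ← hW t ht, integral_gradNormSq, integral_gradNormSq, Ren_eq_l2Inner,
    hcross, finrank_euclideanSpace_fin]
  push_cast
  ring

/-- for a classical solution of the mass-resonance (`κ = 1/2`) quadratic NLS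
system, the variance `V(t) = ∫ |x|² (|u|² + |v|²)` is twice differentiable on `I` with
`V''(t) = 4 (2H(u(t),v(t)) − 3R(u(t),v(t)))`. -/
theorem variance_second_derivative (I : Set ℝ) (hI : IsOpen I) (u v : ℝ → E6 → ℂ)
    (hsol : IsClassicalSol (1 / 2) I u v)
    (V : ℝ → ℝ)
    (hV : ∀ t : ℝ, V t = ∫ x : E6, ‖x‖ ^ 2 * (‖u t x‖ ^ 2 + ‖v t x‖ ^ 2)) :
    ∀ t ∈ I,
      DifferentiableAt ℝ V t ∧ DifferentiableAt ℝ (deriv V) t ∧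
      deriv (deriv V) t
        = 4 * (2 * Hen (1 / 2) (u t) (v t) - 3 * Ren (u t) (v t)) := by
  intro t ht
  have h := variance_second_derivative_general hI hsol (fun s _ ↦ hV s) ht
  refine ⟨h.1, h.2.1, h.2.2.trans ?_⟩
  rw [Hen]
  ring
end
end
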